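/- arXiv:1602.06376 — 2 statements merged into one kernel-verified Lean document; each statement's English description precedes it below -/
import Mathlib

section
/- Let n be an odd integer with n > 1 and let g : ℝⁿ → ℝ be a smooth function. Define u(x,t) = c_n e^{-t/2} ((1/t) ∂/∂t)^{(n-1)/2} ∫_{B_t(x)} I_0((1/2)√(t² − r²)) g(y) dy for t > 0, where ((1/t) ∂/∂t)^k denotes the k-fold iterate of the operator F ↦ (1/t) ∂F/∂t applied in the t-variable. Then u is smooth on ℝⁿ × (0,∞), satisfies the damped wave equation ∂²u/∂t² − Δu + ∂u/∂t = 0 on ℝⁿ × (0,∞), and for every x ∈ ℝⁿ one has u(x,t) → 0 and ∂u/∂t(x,t) → g(x) as t → 0⁺. -/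
open Real Set Filter MeasureTheory Metric
open scoped Nat Topology

noncomputable section

/-- The modified Bessel function of integer order `ν`. -/
def besselI (ν : ℕ) (s : ℝ) : ℝ :=
  ∑' j : ℕ, (1 / ((j ! : ℝ) * ((j + ν)! : ℝ))) * (s / 2) ^ (2 * j + ν)

/-- `k`-fold iterate of the operator `F ↦ (1/t) ∂F/∂t` in the `t`-variable. -/
def iterOp : ℕ → (ℝ → ℝ) → ℝ → ℝ
  | 0, F, t => F t
  | (k + 1), F, t => (1 / t) * deriv (iterOp k F) t

/-- `c_n = 2^{-(n+1)/2} π^{-(n-1)/2}` for odd `n > 1`. -/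
def cnOdd (n : ℕ) : ℝ := (2 : ℝ) ^ (-((n : ℝ) + 1) / 2) * π ^ (-((n : ℝ) - 1) / 2)

/-- The Laplacian of `v : ℝⁿ → ℝ` at `x`, as the sum of second partial derivatives. -/
def lap {n : ℕ} (v : EuclideanSpace ℝ (Fin n) → ℝ) (x : EuclideanSpace ℝ (Fin n)) : ℝ :=
  ∑ i : Fin n, iteratedDeriv 2 (fun a : ℝ => v (x + a • EuclideanSpace.single i (1 : ℝ))) 0

open scoped ContDiff InnerProductSpace Laplacian Convolution

/-!
Write `V_m(x, t) = ∫ K_m(t² - |x - y|²) g(y) dy`, where `K_m(q)` is a constant multiple of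
`√q ^ m I_m(√q / 2)` for `q ≥ 0` and vanishes for `q < 0`, so that the integral of the theorem is
`V_0`. Since `K_{m+1}' = K_m / 2`, one has `∂V_{m+1}/∂t = t V_m`. For `m ≥ 3` the kernel is `C²`
across the light cone; differentiating under the integral and using the three-term recurrence of
the Bessel functions shows that `V_m` solves `∂²V/∂t² - (2μ/t) ∂V/∂t = ΔV + V/4` with
`μ = (n - 1)/2 + m`. The operator `(1/t) ∂/∂t` lowers `μ` by one. It therefore carries the equation
down from `V_3` to `V_0`, avoiding the boundary terms of a direct computation, and `(n - 1)/2`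
further applications reach `μ = 0`, the Klein–Gordon equation, which the factor `e^{-t/2}` turns
into the damped wave equation.

For the initial values, scaling to the unit ball gives `V_0 = tⁿ P(t)` with `P` smooth up to
`t = 0`, and `((1/t) ∂/∂t)^k (t^{2k+1} P)` has the form `t R(t)` with `R(0) = (2k+1)‼ P(0)`; the
double factorial cancels against the one in the volume of the odd-dimensional unit ball.
-/

section BesselClifford

/-- The Bessel–Clifford function `C_m(x) = ∑ⱼ xʲ / (j! (j + m)!)`, the entire function through
which `I_m(s) = (s / 2) ^ m * C_m(s ^ 2 / 4)`. -/
def besselClifford (m : ℕ) (x : ℝ) : ℝ :=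
  ∑' j : ℕ, x ^ j / ((j ! : ℝ) * ((j + m)! : ℝ))

lemma norm_pow_div_factorial_mul_factorial_le (m j : ℕ) (x : ℝ) :
    ‖x ^ j / ((j ! : ℝ) * ((j + m)! : ℝ))‖ ≤ |x| ^ j / (j ! : ℝ) := by
  have one_le : (1 : ℝ) ≤ ((j + m)! : ℝ) := mod_cast Nat.factorial_pos (j + m)
  have pos : (0 : ℝ) < (j ! : ℝ) := mod_cast Nat.factorial_pos j
  rw [norm_div, norm_pow, norm_mul, RCLike.norm_natCast, RCLike.norm_natCast, Real.norm_eq_abs]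
  gcongr
  exact le_mul_of_one_le_right pos.le one_le

lemma summable_besselClifford (m : ℕ) (x : ℝ) :
    Summable fun j : ℕ => x ^ j / ((j ! : ℝ) * ((j + m)! : ℝ)) :=
  .of_norm_bounded (Real.summable_pow_div_factorial |x|)
    fun j => norm_pow_div_factorial_mul_factorial_le m j x

lemma besselClifford_zero_right (m : ℕ) : besselClifford m 0 = 1 / (m ! : ℝ) := by
  rw [besselClifford, tsum_eq_single 0 fun j hj => by simp [hj]]
  simp

lemma besselClifford_eq_add_tsum (m : ℕ) (x : ℝ) :
    besselClifford m x = 1 / (m ! : ℝ) +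
      ∑' j : ℕ, x ^ (j + 1) / (((j + 1)! : ℝ) * ((j + 1 + m)! : ℝ)) := by
  rw [besselClifford, (summable_besselClifford m x).tsum_eq_zero_add]
  simp

lemma hasDerivAt_besselClifford (m : ℕ) (x : ℝ) :
    HasDerivAt (besselClifford m) (besselClifford (m + 1) x) x := by
  rw [funext (besselClifford_eq_add_tsum m)]
  refine (hasDerivAt_tsum_of_isPreconnected
    (g' := fun (j : ℕ) (y : ℝ) => y ^ j / ((j ! : ℝ) * ((j + (m + 1))! : ℝ)))
    (Real.summable_pow_div_factorial (|x| + 1)) (isOpen_ball (x := (0 : ℝ)) (ε := |x| + 1))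
    (convex_ball _ _).isPreconnected (fun j y _ => ?_) (fun j y hy => ?_) (y₀ := x) (by simp)
    ((summable_nat_add_iff 1).2 (summable_besselClifford m x)) (by simp)).const_add _
  · refine ((hasDerivAt_pow (j + 1) y).div_const _).congr_deriv ?_
    rw [show j + (m + 1) = j + 1 + m by ring, Nat.factorial_succ j]
    push_cast
    field_simp
  · have hy : |y| ≤ |x| + 1 := (mem_ball_zero_iff.1 hy).le
    exact (norm_pow_div_factorial_mul_factorial_le (m + 1) j y).trans (by gcongr)

lemma contDiff_besselClifford (m : ℕ) : ContDiff ℝ ∞ (besselClifford m) := by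
  have iteratedDeriv_eq (k : ℕ) : iteratedDeriv k (besselClifford m) = besselClifford (m + k) := by
    induction k with
    | zero => simp
    | succ k ih =>
      rw [iteratedDeriv_succ, ih]
      exact funext fun x => (hasDerivAt_besselClifford (m + k) x).deriv
  refine contDiff_of_differentiable_iteratedDeriv fun k _ x => ?_
  rw [iteratedDeriv_eq]
  exact (hasDerivAt_besselClifford (m + k) x).differentiableAt

lemma besselClifford_recurrence (m : ℕ) (x : ℝ) :
    (m + 1) * besselClifford (m + 1) x + x * besselClifford (m + 2) x = besselClifford m x := by
  rw [besselClifford_eq_add_tsum m, besselClifford_eq_add_tsum (m + 1), mul_add, besselClifford,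
    ← tsum_mul_left, ← tsum_mul_left, add_assoc, ← Summable.tsum_add
      (((summable_nat_add_iff 1).2 (summable_besselClifford (m + 1) x)).mul_left _)
      ((summable_besselClifford (m + 2) x).mul_left _)]
  congr 1
  · rw [Nat.factorial_succ]
    push_cast
    field_simp
  · refine tsum_congr fun j => ?_
    rw [show j + 1 + m = j + m + 1 by ring, show j + 1 + (m + 1) = j + m + 1 + 1 by ring,
      show j + (m + 2) = j + m + 1 + 1 by ring, Nat.factorial_succ (j + m + 1),
      Nat.factorial_succ j]
    push_cast
    field_simp
    ring

lemma besselI_zero_eq_besselClifford (s : ℝ) : besselI 0 s = besselClifford 0 (s ^ 2 / 4) := by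
  refine tsum_congr fun j => ?_
  simp only [add_zero, pow_mul, div_pow, one_div_mul_eq_div]
  norm_num

end BesselClifford

section Kernel

/-- The function `q ↦ (q / 2) ^ m * C_m(q / 16)`, normalised so that differentiation lowers `m` by
one up to a factor `1 / 2`; up to a constant it is `√q ^ m * I_m(√q / 2)`. -/
def kleinGordonProfile (m : ℕ) (q : ℝ) : ℝ :=
  (q / 2) ^ m * besselClifford m (q / 16)

lemma hasDerivAt_kleinGordonProfile (m : ℕ) (q : ℝ) :
    HasDerivAt (kleinGordonProfile (m + 1)) (kleinGordonProfile m q / 2) q := by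
  have hC := (hasDerivAt_besselClifford (m + 1) (q / 16)).comp q ((hasDerivAt_id q).div_const 16)
  refine ((((hasDerivAt_id q).div_const 2).pow (m + 1)).mul hC).congr_deriv ?_
  rw [kleinGordonProfile, ← besselClifford_recurrence m]
  simp only [id, Function.comp_apply, Pi.pow_apply, Nat.cast_add, Nat.cast_one,
    Nat.add_sub_cancel]
  ring

lemma contDiff_kleinGordonProfile (m : ℕ) : ContDiff ℝ ∞ (kleinGordonProfile m) :=
  ((contDiff_id.div_const 2).pow m).mul
    ((contDiff_besselClifford m).comp (contDiff_id.div_const 16))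

lemma kleinGordonProfile_recurrence (m : ℕ) (q : ℝ) :
    q * kleinGordonProfile m q =
      2 * (m + 1) * kleinGordonProfile (m + 1) q + kleinGordonProfile (m + 2) q / 4 := by
  simp only [kleinGordonProfile, ← besselClifford_recurrence m]
  ring

/-- The extension by zero of `kleinGordonProfile m` to negative arguments. Evaluated at
`t ^ 2 - ‖z‖ ^ 2` it is supported in the light cone `‖z‖ ≤ |t|`. -/
def kleinGordonKernel (m : ℕ) : ℝ → ℝ :=
  (Ici 0).indicator (kleinGordonProfile m)

lemma kleinGordonKernel_of_nonneg (m : ℕ) {q : ℝ} (hq : 0 ≤ q) :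
    kleinGordonKernel m q = kleinGordonProfile m q :=
  indicator_of_mem hq _

lemma kleinGordonKernel_of_neg (m : ℕ) {q : ℝ} (hq : q < 0) : kleinGordonKernel m q = 0 :=
  indicator_of_notMem (notMem_Ici.2 hq) _

lemma kleinGordonKernel_succ_eq_max (m : ℕ) (q : ℝ) :
    kleinGordonKernel (m + 1) q = kleinGordonProfile (m + 1) (max q 0) := by
  rcases le_or_gt 0 q with hq | hq
  · rw [kleinGordonKernel_of_nonneg _ hq, max_eq_left hq]
  · simp [kleinGordonKernel_of_neg _ hq, max_eq_right hq.le, kleinGordonProfile]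

lemma kleinGordonKernel_recurrence (m : ℕ) (q : ℝ) :
    q * kleinGordonKernel m q =
      2 * (m + 1) * kleinGordonKernel (m + 1) q + kleinGordonKernel (m + 2) q / 4 := by
  rcases le_or_gt 0 q with hq | hq
  · simp only [kleinGordonKernel_of_nonneg _ hq, kleinGordonProfile_recurrence m q]
  · simp only [kleinGordonKernel_of_neg _ hq, mul_zero, zero_div, add_zero]

lemma measurable_kleinGordonKernel (m : ℕ) : Measurable (kleinGordonKernel m) :=
  (contDiff_kleinGordonProfile m).continuous.measurable.indicator measurableSet_Ici

lemma locallyLipschitz_kleinGordonKernel_succ (m : ℕ) :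
    LocallyLipschitz (kleinGordonKernel (m + 1)) := by
  rw [funext (kleinGordonKernel_succ_eq_max m)]
  exact ((contDiff_kleinGordonProfile (m + 1)).of_le (mod_cast le_top)).locallyLipschitz.comp
    (LocallyLipschitz.id.max_const 0)

lemma hasDerivAt_kleinGordonKernel_of_ne (m : ℕ) {q : ℝ} (hq : q ≠ 0) :
    HasDerivAt (kleinGordonKernel (m + 1)) (kleinGordonKernel m q / 2) q := by
  rcases hq.lt_or_gt with hq | hq
  · rw [kleinGordonKernel_of_neg m hq, zero_div]
    refine (hasDerivAt_const q (0 : ℝ)).congr_of_eventuallyEq ?_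
    filter_upwards [Iio_mem_nhds hq] with s hs using kleinGordonKernel_of_neg _ hs
  · rw [kleinGordonKernel_of_nonneg m hq.le]
    refine (hasDerivAt_kleinGordonProfile m q).congr_of_eventuallyEq ?_
    filter_upwards [Ioi_mem_nhds hq] with s hs using kleinGordonKernel_of_nonneg _ (le_of_lt hs)

lemma hasDerivAt_kleinGordonKernel_sq_sub (m : ℕ) {t r : ℝ} (h : t ^ 2 - r ≠ 0) :
    HasDerivAt (fun s => kleinGordonKernel (m + 1) (s ^ 2 - r))
      (t * kleinGordonKernel m (t ^ 2 - r)) t := by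
  refine ((hasDerivAt_kleinGordonKernel_of_ne m h).comp t
    ((hasDerivAt_pow 2 t).sub_const r)).congr_deriv ?_
  ring

lemma hasDerivAt_kleinGordonKernel (m : ℕ) (q : ℝ) :
    HasDerivAt (kleinGordonKernel (m + 2)) (kleinGordonKernel (m + 1) q / 2) q :=
  hasDerivAt_of_hasDerivAt_of_ne' (x := 0)
    (fun _ hq => hasDerivAt_kleinGordonKernel_of_ne (m + 1) hq)
    (locallyLipschitz_kleinGordonKernel_succ (m + 1)).continuous.continuousAt
    ((locallyLipschitz_kleinGordonKernel_succ m).continuous.div_const 2).continuousAt q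

lemma contDiff_kleinGordonKernel (m : ℕ) : ContDiff ℝ m (kleinGordonKernel (m + 1)) := by
  induction m with
  | zero => exact contDiff_zero.2 (locallyLipschitz_kleinGordonKernel_succ 0).continuous
  | succ m ih =>
    have deriv_eq : deriv (kleinGordonKernel (m + 2)) = fun q => kleinGordonKernel (m + 1) q / 2 :=
      funext fun q => (hasDerivAt_kleinGordonKernel m q).deriv
    push_cast
    refine contDiff_succ_iff_deriv.2
      ⟨fun q => (hasDerivAt_kleinGordonKernel m q).differentiableAt, by simp, ?_⟩
    rw [deriv_eq]
    exact ih.div_const 2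

lemma kleinGordonKernel_sq_sub_eq_zero {E : Type*} [SeminormedAddCommGroup E] (m : ℕ) {x y : E}
    {t : ℝ} (h : y ∉ closedBall x |t|) :
    kleinGordonKernel m (t ^ 2 - ‖x - y‖ ^ 2) = 0 := by
  rw [mem_closedBall_iff_norm', not_le] at h
  exact kleinGordonKernel_of_neg m (sub_neg.2 (sq_lt_sq.2 (h.trans_eq (abs_norm _).symm)))

end Kernel

section Laplacian

variable {E : Type*} [NormedAddCommGroup E] [InnerProductSpace ℝ E] [FiniteDimensional ℝ E]

lemma laplacian_eq_sum_fderiv_fderiv {ι : Type*} [Fintype ι] (b : OrthonormalBasis ι ℝ E)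
    {f : E → ℝ} {x : E} (hf : ContDiffAt ℝ 2 f x) :
    Δ f x = ∑ i, fderiv ℝ (fun z => fderiv ℝ f z (b i)) x (b i) := by
  have hf' : DifferentiableAt ℝ (fderiv ℝ f) x :=
    (hf.fderiv_right (m := 1) (by norm_num)).differentiableAt (by norm_num)
  rw [InnerProductSpace.laplacian_eq_iteratedFDeriv_orthonormalBasis f b]
  refine Finset.sum_congr rfl fun i _ => ?_
  rw [iteratedFDeriv_two_apply, fderiv_clm_apply hf' (differentiableAt_const (b i))]
  simp

lemma lap_eq_laplacian {n : ℕ} {v : EuclideanSpace ℝ (Fin n) → ℝ} (hv : ContDiff ℝ 2 v)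
    (x : EuclideanSpace ℝ (Fin n)) : lap v x = Δ v x := by
  rw [laplacian_eq_sum_fderiv_fderiv (EuclideanSpace.basisFun (Fin n) ℝ) hv.contDiffAt]
  refine Finset.sum_congr rfl fun i _ => ?_
  rw [EuclideanSpace.basisFun_apply]
  set e := EuclideanSpace.single i (1 : ℝ)
  have line (a : ℝ) : HasDerivAt (fun a : ℝ => x + a • e) e a := by
    simpa using ((hasDerivAt_id a).smul_const e).const_add x
  have first : deriv (fun a : ℝ => v (x + a • e)) = fun a => fderiv ℝ v (x + a • e) e :=
    funext fun a => ((hv.differentiable two_ne_zero _).hasFDerivAt.comp_hasDerivAt a (line a)).deriv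
  have hv' : Differentiable ℝ fun z => fderiv ℝ v z e :=
    ((hv.fderiv_right (m := 1) (by norm_num)).clm_apply contDiff_const).differentiable one_ne_zero
  rw [iteratedDeriv_succ, iteratedDeriv_one, first]
  have second := ((hv' (x + (0 : ℝ) • e)).hasFDerivAt.comp_hasDerivAt 0 (line 0)).deriv
  rwa [zero_smul, add_zero] at second

lemma laplacian_comp_const_sub_norm_sq {k k' k'' : ℝ → ℝ} (hk : ∀ q, HasDerivAt k (k' q) q)
    (hk' : ∀ q, HasDerivAt k' (k'' q) q) (hk_smooth : ContDiff ℝ 2 k) (c : ℝ) (z : E) :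
    Δ (fun z : E => k (c - ‖z‖ ^ 2)) z =
      4 * ‖z‖ ^ 2 * k'' (c - ‖z‖ ^ 2) - 2 * Module.finrank ℝ E * k' (c - ‖z‖ ^ 2) := by
  let b := stdOrthonormalBasis ℝ E
  have hq (z : E) : HasFDerivAt (fun z : E => c - ‖z‖ ^ 2) (-(2 • innerSL ℝ z)) z :=
    (hasStrictFDerivAt_norm_sq z).hasFDerivAt.const_sub c
  have first (v z : E) : fderiv ℝ (fun z : E => k (c - ‖z‖ ^ 2)) z v =
      -2 * (k' (c - ‖z‖ ^ 2) * inner ℝ z v) := by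
    have h : HasFDerivAt (fun z : E => k (c - ‖z‖ ^ 2)) _ z := (hk _).comp_hasFDerivAt z (hq z)
    rw [h.fderiv]
    simp only [smul_neg, neg_apply, smul_apply, coe_innerSL_apply, nsmul_eq_mul, Nat.cast_ofNat,
      smul_eq_mul, neg_mul, neg_inj]
    ring
  have second (v : E) : fderiv ℝ (fun z : E => -2 * (k' (c - ‖z‖ ^ 2) * inner ℝ z v)) z v =
      4 * k'' (c - ‖z‖ ^ 2) * ‖inner ℝ z v‖ ^ 2 - 2 * k' (c - ‖z‖ ^ 2) * ‖v‖ ^ 2 := by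
    have hinner : HasFDerivAt (fun z : E => inner ℝ z v) (innerSL ℝ v) z := by
      simpa [real_inner_comm] using (innerSL ℝ v).hasFDerivAt (x := z)
    have h : HasFDerivAt (fun z : E => -2 * (k' (c - ‖z‖ ^ 2) * inner ℝ z v)) _ z :=
      (((hk' _).comp_hasFDerivAt z (hq z)).mul hinner).const_mul (-2)
    rw [h.fderiv]
    simp only [Function.comp_apply, smul_neg, smul_add, neg_smul, neg_neg, add_apply, neg_apply,
      smul_apply, coe_innerSL_apply, inner_self_eq_norm_sq_to_K, ringHom_apply, smul_eq_mul,
      nsmul_eq_mul, Nat.cast_ofNat, norm_eq_abs, sq_abs]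
    ring
  have hF : ContDiff ℝ 2 (fun z : E => k (c - ‖z‖ ^ 2)) :=
    hk_smooth.comp (contDiff_const.sub (contDiff_norm_sq ℝ))
  rw [laplacian_eq_sum_fderiv_fderiv b hF.contDiffAt]
  simp_rw [first, second, b.norm_eq_one, Finset.sum_sub_distrib, ← Finset.mul_sum,
    b.sum_sq_norm_inner_left]
  simp only [one_pow, Finset.sum_const, Finset.card_univ, Fintype.card_fin, nsmul_eq_mul, mul_one]
  ring

variable [MeasurableSpace E] [BorelSpace E] {g F : E → ℝ}

lemma fderiv_convolution_apply (hg : LocallyIntegrable g) (hF : ContDiff ℝ 1 F)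
    (hc : HasCompactSupport F) (x v : E) :
    fderiv ℝ (g ⋆ F) x v = (g ⋆ fun z => fderiv ℝ F z v) x := by
  rw [(hc.hasFDerivAt_convolution_right _ hg hF x).fderiv]
  exact convolution_precompR_apply _ hg (hc.fderiv ℝ) (hF.continuous_fderiv one_ne_zero) x v

lemma laplacian_convolution (hg : LocallyIntegrable g) (hF : ContDiff ℝ 2 F)
    (hc : HasCompactSupport F) (x : E) : Δ (g ⋆ F) x = (g ⋆ Δ F) x := by
  let b := stdOrthonormalBasis ℝ E
  have hF' (v : E) : ContDiff ℝ 1 fun z => fderiv ℝ F z v :=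
    (hF.fderiv_right (by norm_num)).clm_apply contDiff_const
  have hF'' (v : E) : Continuous fun z => fderiv ℝ (fun z => fderiv ℝ F z v) z v :=
    ((hF' v).continuous_fderiv one_ne_zero).clm_apply continuous_const
  have hc' (v : E) : HasCompactSupport fun z => fderiv ℝ F z v := hc.fderiv_apply ℝ v
  have integrable (v : E) :
      Integrable fun y => g y • fderiv ℝ (fun z => fderiv ℝ F z v) (x - y) v :=
    ((hc' v).fderiv_apply ℝ v).convolutionExists_right (.lsmul ℝ ℝ) hg (hF'' v) x
  rw [laplacian_eq_sum_fderiv_fderiv b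
    (hc.contDiff_convolution_right (n := 2) _ hg hF).contDiffAt, convolution_lsmul]
  simp_rw [laplacian_eq_sum_fderiv_fderiv b hF.contDiffAt, Finset.smul_sum]
  rw [integral_finsetSum _ fun i _ => integrable (b i)]
  refine Finset.sum_congr rfl fun i _ => ?_
  rw [funext fun z => fderiv_convolution_apply hg (hF.of_le one_le_two) hc z (b i),
    fderiv_convolution_apply hg (hF' (b i)) (hc' (b i)), convolution_lsmul]

end Laplacian

section Potential

variable {E : Type*} [NormedAddCommGroup E] [InnerProductSpace ℝ E] [FiniteDimensional ℝ E]

lemma hasCompactSupport_kleinGordonKernel (m : ℕ) (t : ℝ) :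
    HasCompactSupport fun z : E => kleinGordonKernel m (t ^ 2 - ‖z‖ ^ 2) :=
  HasCompactSupport.intro (isCompact_closedBall 0 |t|) fun z hz => by
    simpa using kleinGordonKernel_sq_sub_eq_zero m hz

lemma exists_lipschitzOnWith_kleinGordonKernel_sq_sub (m : ℕ) (x : E) (T : ℝ) :
    ∃ C, ∀ y ∈ closedBall x T,
      LipschitzOnWith C (fun s => kleinGordonKernel (m + 1) (s ^ 2 - ‖x - y‖ ^ 2)) (Icc 0 T) := by
  have smooth : ContDiff ℝ 1 fun p : ℝ × E => p.1 ^ 2 - ‖x - p.2‖ ^ 2 :=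
    (contDiff_fst.pow 2).sub ((contDiff_norm_sq ℝ).comp (contDiff_const.sub contDiff_snd))
  have lipschitz : LocallyLipschitz fun p : ℝ × E =>
      kleinGordonKernel (m + 1) (p.1 ^ 2 - ‖x - p.2‖ ^ 2) :=
    (locallyLipschitz_kleinGordonKernel_succ m).comp smooth.locallyLipschitz
  obtain ⟨C, hC⟩ := lipschitz.locallyLipschitzOn.exists_lipschitzOnWith_of_compact
    (isCompact_Icc.prod (isCompact_closedBall x T))
  refine ⟨C, fun y hy => LipschitzOnWith.of_dist_le_mul fun s hs s' hs' => ?_⟩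
  simpa only [dist_prod_same_right] using hC.dist_le_mul (s, y) ⟨hs, hy⟩ (s', y) ⟨hs', hy⟩

variable [MeasurableSpace E] [BorelSpace E] {g : E → ℝ}

/-- The retarded potential `∫ K_m(t ^ 2 - ‖x - y‖ ^ 2) * g y dy` of a density `g`, where
`K_m = kleinGordonKernel m`. For `m = 0` it is the integral in the solution formula. -/
def kleinGordonPotential (m : ℕ) (g : E → ℝ) (x : E) (t : ℝ) : ℝ :=
  (g ⋆ fun z => kleinGordonKernel m (t ^ 2 - ‖z‖ ^ 2)) x

lemma kleinGordonPotential_eq_setIntegral (m : ℕ) (g : E → ℝ) (x : E) {t T : ℝ} (h : |t| ≤ T) :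
    kleinGordonPotential m g x t =
      ∫ y in closedBall x T, g y * kleinGordonKernel m (t ^ 2 - ‖x - y‖ ^ 2) :=
  (setIntegral_eq_integral_of_forall_compl_eq_zero fun _ hy => mul_eq_zero_of_right _
    (kleinGordonKernel_sq_sub_eq_zero m fun hy' => hy (closedBall_subset_closedBall h hy'))).symm

lemma kleinGordonPotential_zero_eq_setIntegral_besselI (g : E → ℝ) (x : E) {t : ℝ} (ht : 0 ≤ t) :
    kleinGordonPotential 0 g x t =
      ∫ y in closedBall x t, besselI 0 ((1 / 2) * √(t ^ 2 - ‖x - y‖ ^ 2)) * g y := by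
  rw [kleinGordonPotential_eq_setIntegral 0 g x (abs_of_nonneg ht).le]
  refine setIntegral_congr_fun measurableSet_closedBall fun y hy => ?_
  have hq : 0 ≤ t ^ 2 - ‖x - y‖ ^ 2 :=
    sub_nonneg.2 (pow_le_pow_left₀ (norm_nonneg _) (mem_closedBall_iff_norm'.1 hy) 2)
  simp only [kleinGordonKernel_of_nonneg 0 hq, kleinGordonProfile, besselI_zero_eq_besselClifford,
    mul_pow, Real.sq_sqrt hq, pow_zero, one_mul]
  ring_nf

lemma ae_sq_sub_norm_sq_ne_zero (x : E) {t : ℝ} (ht : t ≠ 0) :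
    ∀ᵐ y : E, t ^ 2 - ‖x - y‖ ^ 2 ≠ 0 := by
  have null : volume (sphere x |t|) = 0 :=
    Measure.addHaar_sphere_of_ne_zero volume x (abs_ne_zero.2 ht)
  filter_upwards [measure_eq_zero_iff_ae_notMem.1 null] with y hy h
  refine hy (mem_sphere.2 ?_)
  rw [dist_eq_norm', ← abs_norm, ← sq_eq_sq_iff_abs_eq_abs]
  linarith

lemma hasDerivAt_kleinGordonPotential (hg : LocallyIntegrable g) (m : ℕ) (x : E) {t : ℝ}
    (ht : 0 < t) :
    HasDerivAt (kleinGordonPotential (m + 1) g x) (t * kleinGordonPotential m g x t) t := by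
  set B := closedBall x (t + 1)
  have hB : IsCompact B := isCompact_closedBall x (t + 1)
  have hgB : IntegrableOn g B := hg.integrableOn_isCompact hB
  have near : Icc 0 (t + 1) ∈ 𝓝 t := Icc_mem_nhds ht (lt_add_one t)
  obtain ⟨C, hC⟩ := exists_lipschitzOnWith_kleinGordonKernel_sq_sub m x (t + 1)
  have hK := (locallyLipschitz_kleinGordonKernel_succ m).continuous
  have hK' := measurable_kleinGordonKernel m
  have integrable (s : ℝ) :
      IntegrableOn (fun y => g y * kleinGordonKernel (m + 1) (s ^ 2 - ‖x - y‖ ^ 2)) B :=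
    hgB.mul_continuousOn (by fun_prop) hB
  have measurable : AEStronglyMeasurable
      (fun y => t * (g y * kleinGordonKernel m (t ^ 2 - ‖x - y‖ ^ 2))) (volume.restrict B) :=
    (hgB.aestronglyMeasurable.mul
      (hK'.comp (by fun_prop)).aestronglyMeasurable).const_mul t
  have lipschitz (y : E) (hy : y ∈ B) : LipschitzOnWith (Real.nnabs (|g y| * C))
      (fun s => g y * kleinGordonKernel (m + 1) (s ^ 2 - ‖x - y‖ ^ 2)) (Icc 0 (t + 1)) := by
    have constant : Real.nnabs (|g y| * C) = ‖g y‖₊ * C := NNReal.eq (by simp)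
    exact constant ▸ (lipschitzWith_smul (g y)).comp_lipschitzOnWith (hC y hy)
  have pointwise : ∀ᵐ y ∂volume.restrict B,
      HasDerivAt (fun s => g y * kleinGordonKernel (m + 1) (s ^ 2 - ‖x - y‖ ^ 2))
        (t * (g y * kleinGordonKernel m (t ^ 2 - ‖x - y‖ ^ 2))) t := by
    filter_upwards [ae_restrict_of_ae (ae_sq_sub_norm_sq_ne_zero x ht.ne')] with y hy
    exact ((hasDerivAt_kleinGordonKernel_sq_sub m hy).const_mul (g y)).congr_deriv
      (mul_left_comm _ _ _)
  have derivative := (hasDerivAt_integral_of_dominated_loc_of_lip near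
    (.of_forall fun s => (integrable s).aestronglyMeasurable) (integrable t)
    measurable (ae_restrict_of_forall_mem measurableSet_closedBall lipschitz)
    (hgB.abs.mul_const C) pointwise).2
  rw [integral_const_mul, ← kleinGordonPotential_eq_setIntegral m g x
    ((abs_of_pos ht).trans_le (le_add_of_nonneg_right zero_le_one))] at derivative
  refine derivative.congr_of_eventuallyEq ?_
  filter_upwards [near] with s hs
    using kleinGordonPotential_eq_setIntegral (m + 1) g x ((abs_of_nonneg hs.1).trans_le hs.2)

lemma laplacian_kleinGordonPotential (hg : LocallyIntegrable g) (m : ℕ) (x : E) (t : ℝ) :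
    Δ (fun z => kleinGordonPotential (m + 3) g z t) x =
      t ^ 2 * kleinGordonPotential (m + 1) g x t
        - (Module.finrank ℝ E + 2 * (m + 2)) * kleinGordonPotential (m + 2) g x t
        - kleinGordonPotential (m + 3) g x t / 4 := by
  have integrable (j : ℕ) : Integrable fun y =>
      g y • kleinGordonKernel (j + 1) (t ^ 2 - ‖x - y‖ ^ 2) :=
    (hasCompactSupport_kleinGordonKernel (j + 1) t).convolutionExists_right (.lsmul ℝ ℝ) hg
      ((locallyLipschitz_kleinGordonKernel_succ j).continuous.comp (by fun_prop)) x
  have kernel_eq (z : E) : Δ (fun z : E => kleinGordonKernel (m + 3) (t ^ 2 - ‖z‖ ^ 2)) z =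
      t ^ 2 * kleinGordonKernel (m + 1) (t ^ 2 - ‖z‖ ^ 2)
        - (Module.finrank ℝ E + 2 * (m + 2)) * kleinGordonKernel (m + 2) (t ^ 2 - ‖z‖ ^ 2)
        - kleinGordonKernel (m + 3) (t ^ 2 - ‖z‖ ^ 2) / 4 := by
    have recurrence := kleinGordonKernel_recurrence (m + 1) (t ^ 2 - ‖z‖ ^ 2)
    push_cast at recurrence
    rw [laplacian_comp_const_sub_norm_sq (hasDerivAt_kleinGordonKernel (m + 1))
      (fun q => (hasDerivAt_kleinGordonKernel m q).div_const 2)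
      ((contDiff_kleinGordonKernel (m + 2)).of_le (by norm_cast; omega))]
    linear_combination -recurrence
  have hF : ContDiff ℝ 2 fun z : E => kleinGordonKernel (m + 3) (t ^ 2 - ‖z‖ ^ 2) :=
    ((contDiff_kleinGordonKernel (m + 2)).of_le (by norm_cast; omega)).comp
      (contDiff_const.sub (contDiff_norm_sq ℝ))
  have integrable_sub : Integrable fun y =>
      t ^ 2 * (g y • kleinGordonKernel (m + 1) (t ^ 2 - ‖x - y‖ ^ 2))
        - (Module.finrank ℝ E + 2 * (m + 2))
          * (g y • kleinGordonKernel (m + 2) (t ^ 2 - ‖x - y‖ ^ 2)) :=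
    ((integrable m).const_mul _).sub ((integrable (m + 1)).const_mul _)
  refine (laplacian_convolution hg hF (hasCompactSupport_kleinGordonKernel (m + 3) t) x).trans ?_
  simp only [kleinGordonPotential, convolution_lsmul, kernel_eq]
  rw [← integral_const_mul, ← integral_const_mul, ← integral_div,
    ← integral_sub ((integrable m).const_mul _) ((integrable (m + 1)).const_mul _),
    ← integral_sub integrable_sub ((integrable (m + 2)).div_const 4)]
  refine integral_congr_ae (.of_forall fun y => ?_)
  simp only [smul_eq_mul]
  ring

end Potential

section Scaling

variable {E : Type*} [NormedAddCommGroup E] [InnerProductSpace ℝ E] [FiniteDimensional ℝ E]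
  [MeasurableSpace E] [BorelSpace E] {g : E → ℝ}

lemma contDiff_setIntegral_closedBall {P : Type*} [NormedAddCommGroup P] [NormedSpace ℝ P]
    {f : P × E → ℝ} (hf : ContDiff ℝ ∞ f) :
    ContDiff ℝ ∞ fun p => ∫ z in closedBall (0 : E) 1, f (p, z) := by
  let χ : ContDiffBump (0 : E) := ⟨1, 2, one_pos, one_lt_two⟩
  have locallyIntegrable :
      LocallyIntegrable ((closedBall (0 : E) 1).indicator fun _ => (1 : ℝ)) :=
    ((integrable_indicator_iff measurableSet_closedBall).2
      (integrableOn_const measure_closedBall_lt_top.ne)).locallyIntegrable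
  have support (p : P) (z : E) (hz : z ∉ closedBall (0 : E) 2) : χ z * f (p, -z) = 0 :=
    mul_eq_zero_of_left (χ.zero_of_le_dist (not_le.1 hz).le) _
  have smooth : ContDiff ℝ ∞ fun q : P × E => χ q.2 * f (q.1, -q.2) :=
    (χ.contDiff.comp contDiff_snd).mul (hf.comp (contDiff_fst.prodMk contDiff_snd.neg))
  have smooth_convolution := contDiffOn_convolution_right_with_param_comp (.lsmul ℝ ℝ)
    (contDiffOn_const (c := (0 : E))) (μ := volume) isOpen_univ (isCompact_closedBall 0 2)
    (fun p z _ => support p z) locallyIntegrable smooth.contDiffOn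
  convert contDiffOn_univ.1 smooth_convolution using 2 with p
  rw [convolution_lsmul, ← integral_indicator measurableSet_closedBall]
  refine integral_congr_ae (.of_forall fun z => ?_)
  by_cases hz : z ∈ closedBall (0 : E) 1
  · have : χ (-z) = 1 := χ.one_of_mem_closedBall (by simpa using hz)
    simp [indicator_of_mem hz, this]
  · simp [indicator_of_notMem hz]

/-- The potential `kleinGordonPotential m g x t` divided by `t ^ dim E`, written on the unit ball
through the substitution `y = x + t z`; unlike the potential it is smooth up to `t = 0`. -/
def rescaledPotential (m : ℕ) (g : E → ℝ) (x : E) (t : ℝ) : ℝ :=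
  ∫ z in closedBall (0 : E) 1, kleinGordonProfile m (t ^ 2 * (1 - ‖z‖ ^ 2)) * g (x + t • z)

lemma contDiff_rescaledPotential (m : ℕ) (hg : ContDiff ℝ ∞ g) :
    ContDiff ℝ ∞ fun p : E × ℝ => rescaledPotential m g p.1 p.2 := by
  have smooth : ContDiff ℝ ∞ fun q : (E × ℝ) × E => q.1.2 ^ 2 * (1 - ‖q.2‖ ^ 2) :=
    (contDiff_fst.snd.pow 2).mul (contDiff_const.sub (contDiff_snd.norm_sq ℝ))
  exact contDiff_setIntegral_closedBall (f := fun q : (E × ℝ) × E =>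
      kleinGordonProfile m (q.1.2 ^ 2 * (1 - ‖q.2‖ ^ 2)) * g (q.1.1 + q.1.2 • q.2))
    (((contDiff_kleinGordonProfile m).comp smooth).mul
      (hg.comp (contDiff_fst.fst.add (contDiff_fst.snd.smul contDiff_snd))))

lemma kleinGordonPotential_eq_pow_mul (m : ℕ) (g : E → ℝ) (x : E) {t : ℝ} (ht : 0 < t) :
    kleinGordonPotential m g x t = t ^ Module.finrank ℝ E * rescaledPotential m g x t := by
  let F (y : E) : ℝ := kleinGordonKernel m (t ^ 2 - ‖y‖ ^ 2) * g (x + y)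
  have kernel (z : E) : F (t • z) = (closedBall (0 : E) 1).indicator
      (fun z => kleinGordonProfile m (t ^ 2 * (1 - ‖z‖ ^ 2)) * g (x + t • z)) z := by
    have hq : t ^ 2 - ‖t • z‖ ^ 2 = t ^ 2 * (1 - ‖z‖ ^ 2) := by
      rw [norm_smul_of_nonneg ht.le]
      ring
    by_cases hz : z ∈ closedBall (0 : E) 1
    · have : 0 ≤ 1 - ‖z‖ ^ 2 :=
        sub_nonneg.2 (pow_le_one₀ (norm_nonneg z) (mem_closedBall_zero_iff.1 hz))
      simp only [F, hq, indicator_of_mem hz, kleinGordonKernel_of_nonneg m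
        (mul_nonneg (sq_nonneg t) this)]
    · have : 1 - ‖z‖ ^ 2 < 0 :=
        sub_neg.2 (one_lt_pow₀ (not_le.1 (mt mem_closedBall_zero_iff.2 hz)) two_ne_zero)
      simp only [F, hq, indicator_of_notMem hz, kleinGordonKernel_of_neg m
        (mul_neg_of_pos_of_neg (pow_pos ht 2) this), zero_mul]
  calc kleinGordonPotential m g x t
      = ∫ y, F y := by
        rw [kleinGordonPotential, convolution_lsmul, ← integral_add_left_eq_self _ x]
        refine integral_congr_ae (.of_forall fun y => ?_)
        simp only [F, sub_add_cancel_left, norm_neg, smul_eq_mul, mul_comm]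
    _ = t ^ Module.finrank ℝ E * ∫ z, F (t • z) := by
        rw [Measure.integral_comp_smul_of_nonneg volume F t (hR := ht.le), smul_eq_mul,
          mul_inv_cancel_left₀ (pow_pos ht _).ne']
    _ = t ^ Module.finrank ℝ E * rescaledPotential m g x t := by
        simp only [kernel]
        rw [integral_indicator measurableSet_closedBall, rescaledPotential]

lemma contDiffOn_kleinGordonPotential (m : ℕ) (hg : ContDiff ℝ ∞ g) :
    ContDiffOn ℝ ∞ (fun p : E × ℝ => kleinGordonPotential m g p.1 p.2) (univ ×ˢ Ioi 0) :=
  ((contDiff_snd.pow (Module.finrank ℝ E)).mul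
    (contDiff_rescaledPotential m hg)).contDiffOn.congr fun p hp =>
      kleinGordonPotential_eq_pow_mul m g p.1 hp.2

lemma doubleFactorial_mul_rescaledPotential_zero {k : ℕ} (hE : Module.finrank ℝ E = 2 * k + 1)
    (g : E → ℝ) (x : E) :
    (2 * k + 1)‼ * rescaledPotential 0 g x 0 = π ^ k * 2 ^ (k + 1) * g x := by
  have volume_ball : volume.real (closedBall (0 : E) 1) = π ^ k * 2 ^ (k + 1) / (2 * k + 1)‼ := by
    rw [measureReal_def, InnerProductSpace.volume_closedBall_of_dim_odd hE, hE, ENNReal.ofReal_one,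
      one_pow, one_mul, ENNReal.toReal_ofReal (by positivity)]
  have ne_zero : ((2 * k + 1)‼ : ℝ) ≠ 0 := by positivity
  simp only [rescaledPotential, kleinGordonProfile, besselClifford_zero_right, volume_ball,
    setIntegral_const, ne_eq, OfNat.ofNat_ne_zero, not_false_eq_true, zero_pow, zero_mul, zero_div,
    pow_zero, one_mul, Nat.factorial_zero, Nat.cast_one, zero_smul, add_zero, smul_eq_mul]
  field_simp

end Scaling

section MixedDerivatives

variable {F G : Type*} [NormedAddCommGroup F] [NormedSpace ℝ F] [NormedAddCommGroup G]
  [NormedSpace ℝ G] {f : F → G} {p : F}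

lemma fderiv_fderiv_apply_comm (hf : ContDiffAt ℝ 2 f p) (v w : F) :
    fderiv ℝ (fun y => fderiv ℝ f y v) p w = fderiv ℝ (fun y => fderiv ℝ f y w) p v := by
  have hf' : DifferentiableAt ℝ (fderiv ℝ f) p :=
    (hf.fderiv_right (m := 1) le_rfl).differentiableAt one_ne_zero
  have apply_eq (v w : F) :
      fderiv ℝ (fun y => fderiv ℝ f y v) p w = fderiv ℝ (fderiv ℝ f) p w v := by
    rw [fderiv_clm_apply hf' (differentiableAt_const v)]
    simp
  rw [apply_eq, apply_eq,
    hf.isSymmSndFDerivAt (by rw [minSmoothness_of_isRCLikeNormedField]) w v]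

lemma fderiv_fderiv_fderiv_apply_comm (hf : ContDiffAt ℝ 3 f p) (v w : F) :
    fderiv ℝ (fun z => fderiv ℝ (fun y => fderiv ℝ f y v) z v) p w =
      fderiv ℝ (fun z => fderiv ℝ (fun y => fderiv ℝ f y w) z v) p v := by
  have hf' : ContDiffAt ℝ 2 (fun y => fderiv ℝ f y v) p :=
    (hf.fderiv_right (by norm_num)).clm_apply contDiffAt_const
  have near : ∀ᶠ z in 𝓝 p, fderiv ℝ (fun y => fderiv ℝ f y v) z w =
      fderiv ℝ (fun y => fderiv ℝ f y w) z v := by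
    filter_upwards [(hf.of_le (m := 2) (by norm_num)).eventually (by simp)] with z hz
      using fderiv_fderiv_apply_comm hz v w
  rw [fderiv_fderiv_apply_comm hf', EventuallyEq.fderiv_eq near]

end MixedDerivatives

section PositiveTime

variable {E : Type*} [NormedAddCommGroup E] [NormedSpace ℝ E] {V W : E → ℝ → ℝ}

/-- Joint smoothness of `V x t` in the space variable `x` and the time variable `t > 0`. -/
def SmoothForPosTime (V : E → ℝ → ℝ) : Prop :=
  ContDiffOn ℝ ∞ (fun p : E × ℝ => V p.1 p.2) (univ ×ˢ Ioi 0)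

namespace SmoothForPosTime

lemma congr (hV : SmoothForPosTime V) (h : ∀ x, EqOn (W x) (V x) (Ioi 0)) : SmoothForPosTime W :=
  ContDiffOn.congr hV fun p hp => h p.1 hp.2

lemma contDiffAt (hV : SmoothForPosTime V) (x : E) {t : ℝ} (ht : 0 < t) :
    ContDiffAt ℝ ∞ (fun p : E × ℝ => V p.1 p.2) (x, t) :=
  ContDiffOn.contDiffAt hV ((isOpen_univ.prod isOpen_Ioi).mem_nhds ⟨mem_univ x, ht⟩)

lemma contDiff_space (hV : SmoothForPosTime V) {t : ℝ} (ht : 0 < t) :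
    ContDiff ℝ ∞ fun x => V x t :=
  contDiff_iff_contDiffAt.2 fun x =>
    (hV.contDiffAt x ht).comp (f := fun x => (x, t)) x (contDiffAt_id.prodMk contDiffAt_const)

lemma contDiffOn_time (hV : SmoothForPosTime V) (x : E) : ContDiffOn ℝ ∞ (V x) (Ioi 0) :=
  fun _ ht => ((hV.contDiffAt x ht).comp _
    (contDiffAt_const.prodMk contDiffAt_id)).contDiffWithinAt

lemma differentiableAt_time (hV : SmoothForPosTime V) (x : E) {t : ℝ} (ht : 0 < t) :
    DifferentiableAt ℝ (V x) t :=
  ((hV.contDiffOn_time x).contDiffAt (Ioi_mem_nhds ht)).differentiableAt (by simp)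

end SmoothForPosTime

lemma fderiv_comp_prodMk_left {U : E × ℝ → ℝ} {x : E} {t : ℝ} (hU : DifferentiableAt ℝ U (x, t))
    (v : E) : fderiv ℝ (fun z => U (z, t)) x v = fderiv ℝ U (x, t) (v, 0) := by
  have h : HasFDerivAt (fun z => U (z, t)) _ x :=
    hU.hasFDerivAt.comp x (hasFDerivAt_prodMk_left x t)
  rw [h.fderiv, ContinuousLinearMap.comp_apply, ContinuousLinearMap.inl_apply]

lemma deriv_comp_prodMk_right {U : E × ℝ → ℝ} {x : E} {t : ℝ} (hU : DifferentiableAt ℝ U (x, t)) :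
    deriv (fun s => U (x, s)) t = fderiv ℝ U (x, t) (0, 1) :=
  (hU.hasFDerivAt.comp t (hasFDerivAt_prodMk_right x t)).hasDerivAt.deriv

namespace SmoothForPosTime

lemma deriv_eq_fderiv (hV : SmoothForPosTime V) (x : E) {t : ℝ} (ht : 0 < t) :
    deriv (V x) t = fderiv ℝ (fun p : E × ℝ => V p.1 p.2) (x, t) (0, 1) :=
  deriv_comp_prodMk_right ((hV.contDiffAt x ht).differentiableAt (by simp))

lemma deriv_time (hV : SmoothForPosTime V) : SmoothForPosTime fun x => deriv (V x) :=
  ((ContDiffOn.fderiv_of_isOpen hV (isOpen_univ.prod isOpen_Ioi) le_rfl).clm_apply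
    contDiffOn_const).congr fun p hp => hV.deriv_eq_fderiv p.1 hp.2

end SmoothForPosTime

end PositiveTime

section TimeDerivativeOfLaplacian

variable {E : Type*} [NormedAddCommGroup E] [InnerProductSpace ℝ E] [FiniteDimensional ℝ E]

namespace SmoothForPosTime

variable {V : E → ℝ → ℝ}

lemma laplacian_eq_sum (hV : SmoothForPosTime V) {ι : Type*} [Fintype ι]
    (b : OrthonormalBasis ι ℝ E) (x : E) {t : ℝ} (ht : 0 < t) :
    Δ (fun z => V z t) x = ∑ i, fderiv ℝ (fun q => fderiv ℝ (fun p : E × ℝ => V p.1 p.2) q (b i, 0))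
      (x, t) (b i, 0) := by
  have first (z v : E) : fderiv ℝ (fun z => V z t) z v =
      fderiv ℝ (fun p : E × ℝ => V p.1 p.2) (z, t) (v, 0) :=
    fderiv_comp_prodMk_left ((hV.contDiffAt z ht).differentiableAt (by simp)) v
  have smooth (v : E × ℝ) :
      ContDiffAt ℝ 1 (fun q => fderiv ℝ (fun p : E × ℝ => V p.1 p.2) q v) (x, t) :=
    (((hV.contDiffAt x ht).of_le (m := 2) ENat.LEInfty.out).fderiv_right
      (by norm_num)).clm_apply contDiffAt_const
  rw [laplacian_eq_sum_fderiv_fderiv b ((hV.contDiff_space ht).of_le ENat.LEInfty.out).contDiffAt]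
  refine Finset.sum_congr rfl fun i _ => ?_
  simp only [first]
  exact fderiv_comp_prodMk_left ((smooth (b i, 0)).differentiableAt one_ne_zero) (b i)

lemma hasDerivAt_laplacian (hV : SmoothForPosTime V) (x : E) {t : ℝ} (ht : 0 < t) :
    HasDerivAt (fun s => Δ (fun z => V z s) x) (Δ (fun z => deriv (V z) t) x) t := by
  let b := stdOrthonormalBasis ℝ E
  let D (v : E × ℝ) (U : E × ℝ → ℝ) (p : E × ℝ) : ℝ := fderiv ℝ U p v
  let U (p : E × ℝ) : ℝ := V p.1 p.2
  have hU : ContDiffAt ℝ 3 U (x, t) := (hV.contDiffAt x ht).of_le ENat.LEInfty.out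
  have smooth (v : E × ℝ) : ContDiffAt ℝ 1 (D v (D v U)) (x, t) :=
    (((hU.fderiv_right (m := 2) (by norm_num)).clm_apply contDiffAt_const).fderiv_right
      (by norm_num)).clm_apply contDiffAt_const
  have time_deriv : (fun p : E × ℝ => deriv (V p.1) p.2) =ᶠ[𝓝 (x, t)] D (0, 1) U := by
    filter_upwards [(isOpen_univ.prod isOpen_Ioi).mem_nhds ⟨mem_univ x, ht⟩] with p hp
      using hV.deriv_eq_fderiv p.1 hp.2
  have laplacian_deriv : Δ (fun z => deriv (V z) t) x =
      ∑ i, D (0, 1) (D (b i, 0) (D (b i, 0) U)) (x, t) := by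
    rw [hV.deriv_time.laplacian_eq_sum b x ht]
    refine Finset.sum_congr rfl fun i _ => ?_
    have near : D (b i, 0) (fun p => deriv (V p.1) p.2) =ᶠ[𝓝 (x, t)] D (b i, 0) (D (0, 1) U) :=
      time_deriv.fderiv.fun_comp fun A => A (b i, 0)
    exact (DFunLike.congr_fun near.fderiv_eq (b i, 0)).trans
      (fderiv_fderiv_fderiv_apply_comm hU (b i, 0) (0, 1)).symm
  rw [laplacian_deriv]
  refine (HasDerivAt.fun_sum fun i _ => ?_).congr_of_eventuallyEq
    (f := fun s => ∑ i, D (b i, 0) (D (b i, 0) U) (x, s)) ?_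
  · exact (((smooth (b i, 0)).differentiableAt one_ne_zero).hasFDerivAt.comp t
      (hasFDerivAt_prodMk_right x t)).hasDerivAt
  · filter_upwards [Ioi_mem_nhds ht] with s hs using hV.laplacian_eq_sum b x hs

end SmoothForPosTime

end TimeDerivativeOfLaplacian

section EulerPoissonDarboux

variable {E : Type*} [NormedAddCommGroup E] [InnerProductSpace ℝ E] [FiniteDimensional ℝ E]
  {μ c : ℝ} {V W : E → ℝ → ℝ}

/-- `V` is smooth for `t > 0` and solves there the Euler–Poisson–Darboux equation with mass term
`∂²V/∂t² - (2 * μ / t) ∂V/∂t = ΔV + c * V`. -/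
structure SolvesEPD (μ c : ℝ) (V : E → ℝ → ℝ) : Prop where
  smooth : SmoothForPosTime V
  deriv_deriv : ∀ x t, 0 < t →
    deriv (deriv (V x)) t = 2 * μ / t * deriv (V x) t + Δ (fun z => V z t) x + c * V x t

namespace SolvesEPD

lemma congr (hV : SolvesEPD μ c V) (h : ∀ x, EqOn (W x) (V x) (Ioi 0)) : SolvesEPD μ c W where
  smooth := hV.smooth.congr h
  deriv_deriv x t ht := by
    have near : W x =ᶠ[𝓝 t] V x := (h x).eventuallyEq_of_mem (Ioi_mem_nhds ht)
    rw [near.deriv.deriv_eq, near.deriv_eq, near.eq_of_nhds, funext fun z => h z ht]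
    exact hV.deriv_deriv x t ht

lemma one_div_mul_deriv (hV : SolvesEPD μ c V) :
    SolvesEPD (μ - 1) c fun x t => 1 / t * deriv (V x) t := by
  set Z : E → ℝ → ℝ := fun x t => 1 / t * deriv (V x) t
  have smooth : SmoothForPosTime Z :=
    (contDiffOn_const.div contDiffOn_snd fun p hp => (mem_Ioi.1 hp.2).ne').mul hV.smooth.deriv_time
  have deriv_V (x : E) {t : ℝ} (ht : 0 < t) : deriv (V x) t = t * Z x t := by
    rw [← mul_assoc, mul_one_div_cancel ht.ne', one_mul]
  have deriv_deriv_V (x : E) {t : ℝ} (ht : 0 < t) :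
      deriv (deriv (V x)) t = Z x t + t * deriv (Z x) t := by
    have near : deriv (V x) =ᶠ[𝓝 t] fun s => s * Z x s :=
      eventually_of_mem (Ioi_mem_nhds ht) fun s hs => deriv_V x hs
    rw [near.deriv_eq]
    simpa only [one_mul] using
      ((hasDerivAt_id' t).fun_mul (smooth.differentiableAt_time x ht).hasDerivAt).deriv
  refine ⟨smooth, fun x t ht => ?_⟩
  have hZ : HasDerivAt (Z x) (deriv (Z x) t) t := (smooth.differentiableAt_time x ht).hasDerivAt
  have hZ' : HasDerivAt (deriv (Z x)) (deriv (deriv (Z x)) t) t :=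
    (smooth.deriv_time.differentiableAt_time x ht).hasDerivAt
  have equation : (fun s => (1 - 2 * μ) * Z x s + s * deriv (Z x) s) =ᶠ[𝓝 t]
      fun s => Δ (fun z => V z s) x + c * V x s := by
    filter_upwards [Ioi_mem_nhds ht] with s hs
    have hs' : s ≠ 0 := (mem_Ioi.1 hs).ne'
    have epd := hV.deriv_deriv x s hs
    rw [deriv_deriv_V x hs, deriv_V x hs] at epd
    field_simp at epd
    linear_combination epd
  have laplacian_deriv_V : Δ (fun z => deriv (V z) t) x = t * Δ (fun z => Z z t) x := by
    rw [funext fun z => deriv_V z ht]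
    exact InnerProductSpace.laplacian_smul t
      ((smooth.contDiff_space ht).of_le ENat.LEInfty.out).contDiffAt
  have differentiated :=
    ((hZ.const_mul (1 - 2 * μ)).fun_add ((hasDerivAt_id' t).fun_mul hZ')).unique
    (((hV.smooth.hasDerivAt_laplacian x ht).add
      ((hV.smooth.differentiableAt_time x ht).hasDerivAt.const_mul c)).congr_of_eventuallyEq
        equation)
  rw [laplacian_deriv_V, deriv_V x ht] at differentiated
  refine mul_left_cancel₀ ht.ne' ?_
  field_simp
  linear_combination differentiated

lemma iterOp (hV : SolvesEPD μ c V) : ∀ k : ℕ, SolvesEPD (μ - k) c fun x => iterOp k (V x)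
  | 0 => by rwa [Nat.cast_zero, sub_zero]
  | k + 1 => by
    have index_lowered := (hV.iterOp k).one_div_mul_deriv
    rwa [sub_sub, ← Nat.cast_succ] at index_lowered

end SolvesEPD

lemma deriv_deriv_add_deriv_exp_mul {f : ℝ → ℝ} {t : ℝ} (hf : ContDiffAt ℝ 2 f t) (C : ℝ) :
    deriv (deriv fun s => C * exp (-s / 2) * f s) t + deriv (fun s => C * exp (-s / 2) * f s) t =
      C * exp (-t / 2) * (deriv (deriv f) t - f t / 4) := by
  have damping (s : ℝ) : HasDerivAt (fun s => C * exp (-s / 2)) (C * exp (-s / 2) * (-1 / 2)) s :=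
    ((((hasDerivAt_neg s).div_const 2).exp).const_mul C).congr_deriv (mul_assoc _ _ _).symm
  have first : deriv (fun s => C * exp (-s / 2) * f s) =ᶠ[𝓝 t]
      fun s => C * exp (-s / 2) * (-1 / 2) * f s + C * exp (-s / 2) * deriv f s := by
    filter_upwards [hf.eventually (by simp)] with s hs
      using ((damping s).fun_mul (hs.differentiableAt two_ne_zero).hasDerivAt).deriv
  have hf' : HasDerivAt f (deriv f t) t := (hf.differentiableAt two_ne_zero).hasDerivAt
  have hf'' : HasDerivAt (deriv f) (deriv (deriv f) t) t :=
    ((hf.derivWithin (m := 1) le_rfl).differentiableAt one_ne_zero).hasDerivAt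
  have second :=
    (((damping t).mul_const (-1 / 2)).fun_mul hf').fun_add ((damping t).fun_mul hf'')
  rw [first.deriv_eq, first.eq_of_nhds, second.deriv]
  ring

lemma SolvesEPD.dampedWave (hV : SolvesEPD 0 (1 / 4) V) (C : ℝ) (x : E) {t : ℝ} (ht : 0 < t) :
    deriv (deriv fun s => C * exp (-s / 2) * V x s) t
        - Δ (fun z => C * exp (-t / 2) * V z t) x
        + deriv (fun s => C * exp (-s / 2) * V x s) t = 0 := by
  have hVt : ContDiffAt ℝ 2 (V x) t :=
    ((hV.smooth.contDiffOn_time x).of_le ENat.LEInfty.out).contDiffAt (Ioi_mem_nhds ht)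
  have laplacian_eq : Δ (fun z => C * exp (-t / 2) * V z t) x =
      C * exp (-t / 2) * Δ (fun z => V z t) x :=
    InnerProductSpace.laplacian_smul (f := fun z => V z t) (C * exp (-t / 2))
      ((hV.smooth.contDiff_space ht).of_le ENat.LEInfty.out).contDiffAt
  have epd := hV.deriv_deriv x t ht
  rw [mul_zero, zero_div, zero_mul, zero_add] at epd
  linear_combination deriv_deriv_add_deriv_exp_mul hVt C - laplacian_eq
    + C * exp (-t / 2) * epd

variable [MeasurableSpace E] [BorelSpace E] {g : E → ℝ}

lemma solvesEPD_kleinGordonPotential_add_three (hg : ContDiff ℝ ∞ g) (m : ℕ) :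
    SolvesEPD ((Module.finrank ℝ E - 1) / 2 + (m + 3 : ℕ)) (1 / 4)
      (kleinGordonPotential (m + 3) g) where
  smooth := contDiffOn_kleinGordonPotential (m + 3) hg
  deriv_deriv x t ht := by
    have hg' : LocallyIntegrable g := hg.continuous.locallyIntegrable
    have first : deriv (kleinGordonPotential (m + 3) g x) =ᶠ[𝓝 t]
        fun s => s * kleinGordonPotential (m + 2) g x s := by
      filter_upwards [Ioi_mem_nhds ht] with s hs
        using (hasDerivAt_kleinGordonPotential hg' (m + 2) x hs).deriv
    have second := (hasDerivAt_id' t).fun_mul (hasDerivAt_kleinGordonPotential hg' (m + 1) x ht)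
    rw [first.deriv_eq, first.eq_of_nhds, second.deriv, laplacian_kleinGordonPotential hg' m]
    push_cast
    field_simp
    ring

theorem solvesEPD_kleinGordonPotential (hg : ContDiff ℝ ∞ g) (m : ℕ) :
    SolvesEPD ((Module.finrank ℝ E - 1) / 2 + m) (1 / 4) (kleinGordonPotential m g) := by
  have descend (j : ℕ) (h : SolvesEPD ((Module.finrank ℝ E - 1) / 2 + (j + 1 : ℕ)) (1 / 4)
      (kleinGordonPotential (j + 1) g)) :
      SolvesEPD ((Module.finrank ℝ E - 1) / 2 + j) (1 / 4) (kleinGordonPotential j g) := by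
    have lowered (x : E) : EqOn (kleinGordonPotential j g x)
        (fun t => 1 / t * deriv (kleinGordonPotential (j + 1) g x) t) (Ioi 0) := fun t ht => by
      simp only [(hasDerivAt_kleinGordonPotential hg.continuous.locallyIntegrable j x ht).deriv]
      rw [one_div, inv_mul_cancel_left₀ (mem_Ioi.1 ht).ne']
    have index_lowered := h.one_div_mul_deriv.congr lowered
    rwa [Nat.cast_succ, ← add_assoc, add_sub_cancel_right] at index_lowered
  exact descend m (descend (m + 1) (descend (m + 2)
    (solvesEPD_kleinGordonPotential_add_three hg m)))

end EulerPoissonDarboux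

section InitialValues

lemma iterOp_congr {F G : ℝ → ℝ} (h : EqOn F G (Ioi 0)) (k : ℕ) :
    EqOn (iterOp k F) (iterOp k G) (Ioi 0) := by
  induction k with
  | zero => exact h
  | succ k ih =>
    intro t ht
    simp only [iterOp, (ih.eventuallyEq_of_mem (Ioi_mem_nhds ht)).deriv_eq]

lemma exists_eqOn_iterOp_pow_mul (j : ℕ) {P : ℝ → ℝ} (hP : ContDiff ℝ ∞ P) (d : ℕ) :
    ∃ R : ℝ → ℝ, ContDiff ℝ ∞ R ∧ (2 * d + 1)‼ * R 0 = (2 * (d + j) + 1)‼ * P 0 ∧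
      EqOn (iterOp j fun s => s ^ (2 * (d + j) + 1) * P s) (fun t => t ^ (2 * d + 1) * R t)
        (Ioi 0) := by
  induction j generalizing d with
  | zero => exact ⟨P, hP, rfl, fun t _ => rfl⟩
  | succ j ih =>
    obtain ⟨R, hR, hR0, hRt⟩ := ih (d + 1)
    have exponent : 2 * (d + 1 + j) + 1 = 2 * (d + (j + 1)) + 1 := by omega
    rw [exponent] at hR0 hRt
    refine ⟨fun t => (2 * d + 3) * R t + t * deriv R t,
      (contDiff_const.mul hR).add (contDiff_id.mul hR.deriv'), ?_, fun t ht => ?_⟩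
    · rw [← hR0, show 2 * (d + 1) + 1 = 2 * d + 1 + 2 by ring, Nat.doubleFactorial_add_two]
      push_cast
      ring
    · have hR' : HasDerivAt R (deriv R t) t := (hR.differentiable (by simp) t).hasDerivAt
      have derivative := (hasDerivAt_pow (2 * (d + 1) + 1) t).fun_mul hR'
      simp only [iterOp]
      rw [(hRt.eventuallyEq_of_mem (Ioi_mem_nhds ht)).deriv_eq, derivative.deriv]
      have : t ≠ 0 := (mem_Ioi.1 ht).ne'
      push_cast
      field_simp
      ring

lemma tendsto_nhdsGT_zero_of_eqOn {f G : ℝ → ℝ} (hG : ContDiff ℝ 1 G) (h : EqOn f G (Ioi 0)) :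
    Tendsto f (𝓝[>] 0) (𝓝 (G 0)) ∧ Tendsto (deriv f) (𝓝[>] 0) (𝓝 (deriv G 0)) := by
  constructor
  · refine (hG.continuous.continuousWithinAt).congr' ?_
    filter_upwards [self_mem_nhdsWithin] with t ht using (h ht).symm
  · refine ((hG.continuous_deriv le_rfl).continuousWithinAt).congr' ?_
    filter_upwards [self_mem_nhdsWithin] with t ht
      using ((h.eventuallyEq_of_mem (Ioi_mem_nhds ht)).deriv_eq).symm

lemma tendsto_const_mul_exp_mul_id_mul {f R : ℝ → ℝ} (hR : ContDiff ℝ 1 R) (C : ℝ)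
    (h : EqOn f (fun t => C * exp (-t / 2) * (t * R t)) (Ioi 0)) :
    Tendsto f (𝓝[>] 0) (𝓝 0) ∧ Tendsto (deriv f) (𝓝[>] 0) (𝓝 (C * R 0)) := by
  have smooth : ContDiff ℝ 1 fun t : ℝ => C * exp (-t / 2) * (t * R t) := by fun_prop
  have damping : HasDerivAt (fun s : ℝ => C * exp (-s / 2)) (C * (exp (-0 / 2) * (-1 / 2))) 0 :=
    (((hasDerivAt_neg 0).div_const 2).exp).const_mul C
  have at_zero := damping.fun_mul
    ((hasDerivAt_id' 0).fun_mul (hR.differentiable one_ne_zero 0).hasDerivAt)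
  simpa [at_zero.deriv] using tendsto_nhdsGT_zero_of_eqOn smooth h

lemma cnOdd_mul (k : ℕ) : cnOdd (2 * k + 1) * (π ^ k * 2 ^ (k + 1)) = 1 := by
  have two_exponent : -(((2 * k + 1 : ℕ) : ℝ) + 1) / 2 = -(k + 1 : ℕ) := by push_cast; ring
  have pi_exponent : -(((2 * k + 1 : ℕ) : ℝ) - 1) / 2 = -(k : ℕ) := by push_cast; ring
  rw [cnOdd, two_exponent, pi_exponent, Real.rpow_neg zero_le_two, Real.rpow_neg pi_pos.le,
    Real.rpow_natCast, Real.rpow_natCast]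
  field_simp

end InitialValues

section Solution

variable {E : Type*} [NormedAddCommGroup E] [InnerProductSpace ℝ E] [FiniteDimensional ℝ E]
  [MeasurableSpace E] [BorelSpace E] {g : E → ℝ}

lemma exists_eqOn_iterOp_kleinGordonPotential_zero {k : ℕ} (hE : Module.finrank ℝ E = 2 * k + 1)
    (hg : ContDiff ℝ ∞ g) (x : E) :
    ∃ R : ℝ → ℝ, ContDiff ℝ ∞ R ∧ R 0 = π ^ k * 2 ^ (k + 1) * g x ∧
      EqOn (iterOp k (kleinGordonPotential 0 g x)) (fun t => t * R t) (Ioi 0) := by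
  have smooth : ContDiff ℝ ∞ (rescaledPotential 0 g x) :=
    (contDiff_rescaledPotential 0 hg).comp (f := fun t => (x, t))
      (contDiff_const.prodMk contDiff_id)
  have rescaled : EqOn (kleinGordonPotential 0 g x)
      (fun t => t ^ (2 * (0 + k) + 1) * rescaledPotential 0 g x t) (Ioi 0) := fun t ht => by
    rw [kleinGordonPotential_eq_pow_mul 0 g x ht, hE, zero_add]
  obtain ⟨R, hR, hR0, hRt⟩ := exists_eqOn_iterOp_pow_mul k smooth 0
  refine ⟨R, hR, ?_, fun t ht => ?_⟩
  · rwa [zero_add, doubleFactorial_mul_rescaledPotential_zero hE g x, mul_zero, zero_add,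
      Nat.doubleFactorial, Nat.cast_one, one_mul] at hR0
  · simpa only [mul_zero, zero_add, pow_one] using (iterOp_congr rescaled k ht).trans (hRt ht)

theorem damped_wave_solution_odd_dim_general (hE : Odd (Module.finrank ℝ E))
    (hg : ContDiff ℝ ∞ g) (u : E → ℝ → ℝ)
    (hu : ∀ (x : E) (t : ℝ), 0 < t →
      u x t = cnOdd (Module.finrank ℝ E) * exp (-t / 2) *
        iterOp ((Module.finrank ℝ E - 1) / 2)
          (fun s => ∫ y in closedBall x s,
            besselI 0 ((1 / 2) * √(s ^ 2 - ‖x - y‖ ^ 2)) * g y) t) :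
    ContDiffOn ℝ ∞ (fun p : E × ℝ => u p.1 p.2) (univ ×ˢ Ioi 0) ∧
    (∀ (x : E) (t : ℝ), 0 < t →
      deriv (deriv (u x)) t - Δ (fun z => u z t) x + deriv (u x) t = 0) ∧
    (∀ x : E, Tendsto (u x) (𝓝[>] 0) (𝓝 0) ∧ Tendsto (deriv (u x)) (𝓝[>] 0) (𝓝 (g x))) := by
  obtain ⟨k, hk⟩ := hE
  have normalisation : cnOdd (Module.finrank ℝ E) * (π ^ k * 2 ^ (k + 1)) = 1 :=
    hk ▸ cnOdd_mul k
  set C := cnOdd (Module.finrank ℝ E)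
  let V (x : E) : ℝ → ℝ := iterOp k (kleinGordonPotential 0 g x)
  have hV : SolvesEPD 0 (1 / 4) V := by
    simpa [hk, V] using (solvesEPD_kleinGordonPotential hg 0).iterOp k
  have hu' (x : E) : EqOn (u x) (fun t => C * exp (-t / 2) * V x t) (Ioi 0) := fun t ht => by
    rw [hu x t ht, hk, Nat.add_sub_cancel, Nat.mul_div_cancel_left k two_pos]
    exact congrArg _ (iterOp_congr (fun s hs =>
      (kleinGordonPotential_zero_eq_setIntegral_besselI g x (mem_Ioi.1 hs).le).symm) k ht)
  have damping : ContDiff ℝ ∞ fun p : E × ℝ => C * exp (-p.2 / 2) := by fun_prop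
  refine ⟨(damping.contDiffOn.mul hV.smooth).congr fun p hp => hu' p.1 hp.2, fun x t ht => ?_,
    fun x => ?_⟩
  · have near := (hu' x).eventuallyEq_of_mem (Ioi_mem_nhds ht)
    rw [near.deriv.deriv_eq, near.deriv_eq, funext fun z => hu' z ht]
    exact hV.dampedWave C x ht
  · obtain ⟨R, hR, hR0, hRt⟩ := exists_eqOn_iterOp_kleinGordonPotential_zero hk hg x
    have limits := tendsto_const_mul_exp_mul_id_mul (hR.of_le ENat.LEInfty.out) C
      ((hu' x).trans fun t ht => congrArg _ (hRt ht))
    rwa [hR0, ← mul_assoc, normalisation, one_mul] at limits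

end Solution

/-- For odd `n > 1` and smooth `g`, the function
`u(x,t) = c_n e^{-t/2} ((1/t)∂/∂t)^{(n-1)/2} ∫_{B_t(x)} I_0((1/2)√(t²−r²)) g(y) dy`
is smooth on `ℝⁿ × (0,∞)`, solves the damped wave equation there, and satisfies
`u(x,t) → 0` and `∂u/∂t(x,t) → g(x)` as `t → 0⁺`. -/
theorem damped_wave_solution_odd_dim (n : ℕ) (hn : Odd n) (hn1 : 1 < n)
    (g : EuclideanSpace ℝ (Fin n) → ℝ) (hg : ContDiff ℝ (⊤ : ℕ∞) g)
    (u : EuclideanSpace ℝ (Fin n) → ℝ → ℝ)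
    (hu : ∀ (x : EuclideanSpace ℝ (Fin n)) (t : ℝ), 0 < t →
      u x t = cnOdd n * exp (-t / 2) *
        iterOp ((n - 1) / 2)
          (fun s => ∫ y in closedBall x s,
            besselI 0 ((1 / 2) * Real.sqrt (s ^ 2 - ‖x - y‖ ^ 2)) * g y) t) :
    ContDiffOn ℝ (⊤ : ℕ∞) (fun p : EuclideanSpace ℝ (Fin n) × ℝ => u p.1 p.2) (univ ×ˢ Ioi 0) ∧
    (∀ (x : EuclideanSpace ℝ (Fin n)) (t : ℝ), 0 < t →
      deriv (deriv (fun s => u x s)) t - lap (fun z => u z t) x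
        + deriv (fun s => u x s) t = 0) ∧
    (∀ x : EuclideanSpace ℝ (Fin n),
      Tendsto (fun t => u x t) (𝓝[>] 0) (𝓝 0) ∧
      Tendsto (fun t => deriv (fun s => u x s) t) (𝓝[>] 0) (𝓝 (g x))) := by
  have dim : Module.finrank ℝ (EuclideanSpace ℝ (Fin n)) = n := finrank_euclideanSpace_fin
  obtain ⟨smooth, equation, limits⟩ := damped_wave_solution_odd_dim_general
    (dim.symm ▸ hn) hg u (dim.symm ▸ hu)
  refine ⟨smooth, fun x t ht => ?_, limits⟩
  rw [lap_eq_laplacian ((SmoothForPosTime.contDiff_space smooth ht).of_le ENat.LEInfty.out)]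
  exact equation x t ht
end
end

section
/- Let n be an even integer and let g : ℝⁿ → ℝ be a smooth function. Define u(x,t) = 2 c_n e^{-t/2} ((1/t) ∂/∂t)^{(n-2)/2} ∫_{B_t(x)} [cosh((1/2)√(t² − r²)) / √(t² − r²)] g(y) dy for t > 0, where ((1/t) ∂/∂t)^k denotes the k-fold iterate of the operator F ↦ (1/t) ∂F/∂t applied in the t-variable. Then u is smooth on ℝⁿ × (0,∞), satisfies the damped wave equation ∂²u/∂t² − Δu + ∂u/∂t = 0 on ℝⁿ × (0,∞), and for every x ∈ ℝⁿ one has u(x,t) → 0 and ∂u/∂t(x,t) → g(x) as t → 0⁺. -/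
open Real Set Filter MeasureTheory Metric
open scoped Nat Topology

noncomputable section

/-- `c_n = 2^{-(n+2)/2} π^{-n/2}` for even `n`. -/
def cnEven (n : ℕ) : ℝ := (2 : ℝ) ^ (-((n : ℝ) + 2) / 2) * π ^ (-(n : ℝ) / 2)

/-!
Scaling the ball to unit size turns `∫_{B_s(x)} cosh(√(s² - r²) / 2) / √(s² - r²) g(y) dy` into
`s ^ (n - 1) * M(x, s)`, where `M` integrates `cosh(s h / 2) g(x + s y)` over the hemisphere
`{(y, h) | h = √(1 - |y|²)}` and is therefore smooth up to `s = 0`. Since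
`cosh(√q / 2) / √q` has the continuous primitive `4 sinh(√q / 2)` in `q = s² - r²`, integration by
parts gives the Euler–Poisson–Darboux equation `s M'' + n M' = s (ΔM + M / 4)`.
For `n = 2 (k + 1)` one has `((1/t) d/dt)^k (t^(2k+1) M) = t P_k M` with a polynomial `P_k` in
`t d/dt`, and `v = t P_k M` solves `v'' = Δv + v / 4`, so that `exp(-t / 2) v` solves the damped
wave equation. The Cauchy data are read off from `P_k M` at `t = 0`, where the mass of the
hemisphere is cancelled by `2 c_n`.
-/

open scoped ContDiff InnerProductSpace

/-! ### Smooth parametric integrals -/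

section ParametricIntegral

variable {P F Z : Type*} [NormedAddCommGroup P] [NormedSpace ℝ P] [FiniteDimensional ℝ P]
  [NormedAddCommGroup F] [NormedAddCommGroup Z] [MeasurableSpace Z] [BorelSpace Z]
  {ν : Measure Z} [IsFiniteMeasure ν] {K : Set Z}

lemma integrable_of_ae_mem_isCompact (hK : IsCompact K) (hν : ∀ᵐ z ∂ν, z ∈ K) {h : Z → F}
    (hh : Continuous h) : Integrable h ν := by
  rw [← Measure.restrict_eq_self_of_ae_mem hν]
  exact hh.continuousOn.integrableOn_compact hK

variable [NormedSpace ℝ F] [NormedSpace ℝ Z]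

lemma hasFDerivAt_integral_of_contDiff (hK : IsCompact K) (hν : ∀ᵐ z ∂ν, z ∈ K)
    {h : P × Z → F} (hh : ContDiff ℝ 1 h) (p : P) :
    HasFDerivAt (fun q => ∫ z, h (q, z) ∂ν) (∫ z, fderiv ℝ (fun q => h (q, z)) p ∂ν) p := by
  have : ProperSpace P := FiniteDimensional.proper_real P
  have hd : Continuous fun x : P × Z => fderiv ℝ (fun q => h (q, x.2)) x.1 :=
    (ContDiff.fderiv (f := fun (x : P × Z) (q : P) => h (q, x.2)) (n := 0) (m := 1)
      (by fun_prop) contDiff_fst (by norm_num)).continuous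
  obtain ⟨C, hC⟩ := ((isCompact_closedBall p 1).prod hK).exists_bound_of_continuousOn
    hd.continuousOn
  have hi (q : P) : Integrable (fun z => h (q, z)) ν :=
    integrable_of_ae_mem_isCompact hK hν (by fun_prop)
  refine hasFDerivAt_integral_of_dominated_of_fderiv_le (𝕜 := ℝ)
    (F' := fun q z => fderiv ℝ (fun q => h (q, z)) q) (bound := fun _ => C)
    (closedBall_mem_nhds p one_pos) (Eventually.of_forall fun q => (hi q).aestronglyMeasurable)
    (hi p) (integrable_of_ae_mem_isCompact hK hν
      (hd.comp (by fun_prop : Continuous fun z : Z => (p, z)))).aestronglyMeasurable ?_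
    (integrable_const C) ?_
  · filter_upwards [hν] with z hz q hq using hC (q, z) ⟨hq, hz⟩
  · refine ae_of_all _ fun z q _ => ?_
    exact ((hh.differentiable one_ne_zero).comp (by fun_prop) q : DifferentiableAt ℝ
      (fun q => h (q, z)) q).hasFDerivAt

lemma fderiv_integral_apply (hK : IsCompact K) (hν : ∀ᵐ z ∂ν, z ∈ K) {h : P × Z → F}
    (hh : ContDiff ℝ 1 h) (p v : P) :
    fderiv ℝ (fun q => ∫ z, h (q, z) ∂ν) p v = ∫ z, fderiv ℝ (fun q => h (q, z)) p v ∂ν := by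
  have hd : Continuous fun z : Z => fderiv ℝ (fun q => h (q, z)) p :=
    (ContDiff.fderiv (f := fun (z : Z) (q : P) => h (q, z)) (n := 0) (m := 1)
      (by fun_prop) contDiff_const (by norm_num)).continuous
  rw [(hasFDerivAt_integral_of_contDiff hK hν hh p).fderiv,
    ContinuousLinearMap.integral_apply (integrable_of_ae_mem_isCompact hK hν hd)]

lemma contDiff_nat_integral (hK : IsCompact K) (hν : ∀ᵐ z ∂ν, z ∈ K) {n : ℕ} {h : P × Z → F}
    (hh : ContDiff ℝ (n + 1 : ℕ) h) : ContDiff ℝ n fun q => ∫ z, h (q, z) ∂ν := by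
  induction n generalizing h with
  | zero =>
    rw [Nat.cast_zero, contDiff_zero]
    exact continuous_iff_continuousAt.2 fun p =>
      (hasFDerivAt_integral_of_contDiff hK hν (by simpa using hh) p).continuousAt
  | succ n ih =>
    have h1 : ContDiff ℝ 1 h := hh.of_le (by exact_mod_cast Nat.le_add_left 1 (n + 1))
    push_cast
    refine contDiff_succ_iff_fderiv_apply.2
      ⟨fun p => (hasFDerivAt_integral_of_contDiff hK hν h1 p).differentiableAt, by simp,
        fun v => ?_⟩
    simp only [fderiv_integral_apply hK hν h1]
    refine ih (h := fun x => fderiv ℝ (fun q => h (q, x.2)) x.1 v) ?_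
    exact (ContDiff.fderiv (f := fun (x : P × Z) (q : P) => h (q, x.2))
      (hh.comp (by fun_prop)) contDiff_fst (by exact_mod_cast le_rfl)).clm_apply contDiff_const

lemma contDiff_integral (hK : IsCompact K) (hν : ∀ᵐ z ∂ν, z ∈ K) {h : P × Z → F}
    (hh : ContDiff ℝ ∞ h) : ContDiff ℝ ∞ fun q => ∫ z, h (q, z) ∂ν :=
  contDiff_infty.2 fun n => contDiff_nat_integral hK hν (contDiff_infty.1 hh (n + 1))

lemma lineDeriv_integral (hK : IsCompact K) (hν : ∀ᵐ z ∂ν, z ∈ K) {h : P × Z → F}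
    (hh : ContDiff ℝ 1 h) (p v : P) :
    lineDeriv ℝ (fun q => ∫ z, h (q, z) ∂ν) p v =
      ∫ z, lineDeriv ℝ (fun q => h (q, z)) p v ∂ν := by
  have hd (z : Z) : DifferentiableAt ℝ (fun q => h (q, z)) p :=
    (hh.differentiable one_ne_zero).comp (by fun_prop) p
  simp only [(hd _).lineDeriv_eq_fderiv, ← fderiv_integral_apply hK hν hh]
  exact (hasFDerivAt_integral_of_contDiff hK hν hh p).differentiableAt.lineDeriv_eq_fderiv

end ParametricIntegral

/-! ### Line derivatives and the Laplacian -/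

section LineDeriv

variable {E : Type*} [NormedAddCommGroup E] [NormedSpace ℝ E]

lemma lineDeriv_apply_add_smul (f : E → ℝ) (x v : E) (a : ℝ) :
    lineDeriv ℝ f (x + a • v) v = deriv (fun b : ℝ => f (x + b • v)) a := by
  simp only [lineDeriv, add_assoc, ← add_smul]
  simpa using deriv_comp_const_add (fun b : ℝ => f (x + b • v)) a 0

lemma contDiff_lineDeriv {f : E → ℝ} (hf : ContDiff ℝ ∞ f) (v : E) :
    ContDiff ℝ ∞ fun x => lineDeriv ℝ f x v := by
  have h (x : E) : lineDeriv ℝ f x v = fderiv ℝ f x v :=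
    (hf.differentiable (by simp) x).lineDeriv_eq_fderiv
  simp only [h]
  exact (hf.fderiv_right (by simp)).clm_apply contDiff_const

lemma lineDeriv_comm {f : E → ℝ} (hf : ContDiff ℝ ∞ f) (x v w : E) :
    lineDeriv ℝ (fun y => lineDeriv ℝ f y v) x w =
      lineDeriv ℝ (fun y => lineDeriv ℝ f y w) x v := by
  have hd : DifferentiableAt ℝ (fderiv ℝ f) x :=
    ((hf.fderiv_right (m := ∞) (by simp)).differentiable (by simp)) x
  have key (v w : E) : lineDeriv ℝ (fun y => lineDeriv ℝ f y v) x w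
      = fderiv ℝ (fderiv ℝ f) x w v := by
    have h (y : E) : lineDeriv ℝ f y v = fderiv ℝ f y v :=
      (hf.differentiable (by simp) y).lineDeriv_eq_fderiv
    simp only [h]
    rw [(hd.clm_apply (differentiableAt_const v)).lineDeriv_eq_fderiv,
      fderiv_clm_apply hd (differentiableAt_const v)]
    simp
  rw [key, key]
  exact (contDiff_infty.1 hf 2).contDiffAt.isSymmSndFDerivAt (by simp) w v

lemma deriv_apply_prodMk_eq_lineDeriv {H : E → ℝ → ℝ} (x : E) (t : ℝ) :
    deriv (H x) t = lineDeriv ℝ (fun p : E × ℝ => H p.1 p.2) (x, t) (0, 1) := by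
  simpa [lineDeriv] using (deriv_comp_const_add (H x) t 0).symm

lemma contDiff_deriv_snd {H : E → ℝ → ℝ} (hH : ContDiff ℝ ∞ fun p : E × ℝ => H p.1 p.2) :
    ContDiff ℝ ∞ fun p : E × ℝ => deriv (H p.1) p.2 := by
  simpa only [deriv_apply_prodMk_eq_lineDeriv] using contDiff_lineDeriv hH (0, 1)

lemma lineDeriv_apply_left (H : E → ℝ → ℝ) (x v : E) (t : ℝ) :
    lineDeriv ℝ (fun z => H z t) x v =
      lineDeriv ℝ (fun p : E × ℝ => H p.1 p.2) (x, t) (v, 0) := by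
  simp [lineDeriv]

lemma contDiff_lineDeriv_fst {H : E → ℝ → ℝ} (hH : ContDiff ℝ ∞ fun p : E × ℝ => H p.1 p.2)
    (v : E) : ContDiff ℝ ∞ fun p : E × ℝ => lineDeriv ℝ (fun z => H z p.2) p.1 v := by
  simpa only [lineDeriv_apply_left] using contDiff_lineDeriv hH (v, 0)

lemma lineDeriv_deriv_comm {H : E → ℝ → ℝ} (hH : ContDiff ℝ ∞ fun p : E × ℝ => H p.1 p.2)
    (x v : E) (t : ℝ) :
    lineDeriv ℝ (fun z => deriv (H z) t) x v =
      deriv (fun s => lineDeriv ℝ (fun z => H z s) x v) t := by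
  rw [lineDeriv_apply_left (fun z t => deriv (H z) t),
    deriv_apply_prodMk_eq_lineDeriv (H := fun z s => lineDeriv ℝ (fun z => H z s) z v)]
  simp only [deriv_apply_prodMk_eq_lineDeriv, lineDeriv_apply_left]
  exact lineDeriv_comm hH (x, t) (0, 1) (v, 0)

end LineDeriv

section Laplacian

variable {n : ℕ}

local notation "𝔼" => EuclideanSpace ℝ (Fin n)

lemma lap_eq_sum_lineDeriv (v : 𝔼 → ℝ) (x : 𝔼) :
    lap v x = ∑ i, lineDeriv ℝ (fun y => lineDeriv ℝ v y (EuclideanSpace.single i 1)) x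
      (EuclideanSpace.single i 1) := by
  simp only [lap, iteratedDeriv_succ, iteratedDeriv_zero, lineDeriv.eq_1 _ _ x,
    lineDeriv_apply_add_smul]

lemma contDiff_lap {v : 𝔼 → ℝ} (hv : ContDiff ℝ ∞ v) : ContDiff ℝ ∞ (lap v) := by
  simp only [funext (lap_eq_sum_lineDeriv v)]
  exact ContDiff.sum fun i _ => contDiff_lineDeriv (contDiff_lineDeriv hv _) _

lemma lap_const_mul (c : ℝ) (v : 𝔼 → ℝ) (x : 𝔼) : lap (fun z => c * v z) x = c * lap v x := by
  simp only [lap, iteratedDeriv_const_mul_field, Finset.mul_sum]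

lemma lap_add {v w : 𝔼 → ℝ} (hv : ContDiff ℝ ∞ v) (hw : ContDiff ℝ ∞ w) (x : 𝔼) :
    lap (fun z => v z + w z) x = lap v x + lap w x := by
  simp only [lap, ← Finset.sum_add_distrib]
  refine Finset.sum_congr rfl fun i _ => iteratedDeriv_fun_add ?_ ?_
  · exact ((contDiff_infty.1 hv 2).comp (g := v) (by fun_prop)).contDiffAt
  · exact ((contDiff_infty.1 hw 2).comp (g := w) (by fun_prop)).contDiffAt

lemma contDiff_lap_fst {H : 𝔼 → ℝ → ℝ} (hH : ContDiff ℝ ∞ fun p : 𝔼 × ℝ => H p.1 p.2) :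
    ContDiff ℝ ∞ fun p : 𝔼 × ℝ => lap (fun z => H z p.2) p.1 := by
  simp only [lap_eq_sum_lineDeriv]
  exact ContDiff.sum fun i _ => contDiff_lineDeriv_fst (H := fun z s =>
    lineDeriv ℝ (fun z => H z s) z (EuclideanSpace.single i 1)) (contDiff_lineDeriv_fst hH _) _

lemma lap_deriv_comm {H : 𝔼 → ℝ → ℝ} (hH : ContDiff ℝ ∞ fun p : 𝔼 × ℝ => H p.1 p.2)
    (x : 𝔼) (t : ℝ) :
    lap (fun z => deriv (H z) t) x = deriv (fun s => lap (fun z => H z s) x) t := by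
  let e (i : Fin n) : 𝔼 := EuclideanSpace.single i 1
  have h1 (i : Fin n) := contDiff_lineDeriv_fst hH (e i)
  have h2 (i : Fin n) := contDiff_lineDeriv_fst
    (H := fun z s => lineDeriv ℝ (fun z => H z s) z (e i)) (h1 i) (e i)
  have hd (i : Fin n) : DifferentiableAt ℝ
      (fun s => lineDeriv ℝ (fun z => lineDeriv ℝ (fun z => H z s) z (e i)) x (e i)) t :=
    ((h2 i).comp (contDiff_prodMk_right x)).differentiable (by simp) t
  simp only [lap_eq_sum_lineDeriv]
  rw [deriv_fun_sum fun i _ => hd i]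
  refine Finset.sum_congr rfl fun i _ => ?_
  simp only [lineDeriv_deriv_comm hH]
  exact lineDeriv_deriv_comm (h1 i) _ _ _

end Laplacian

/-! ### The operator `((1/t) d/dt)^k` on odd powers -/

section DarbouxOp

/-- The operator `P_k = (3 + t d/dt)(5 + t d/dt) ⋯ (2k + 1 + t d/dt)`, characterised by
`((1/t) d/dt)^k (t^(2k+1) f) = t P_k f`. -/
def darbouxOp : ℕ → (ℝ → ℝ) → ℝ → ℝ
  | 0, f => f
  | k + 1, f => darbouxOp k fun s => (2 * k + 3) * f s + s * deriv f s

lemma iterOp_congr_s2 {F G : ℝ → ℝ} (h : ∀ s > 0, F s = G s) (k : ℕ) :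
    ∀ t > 0, iterOp k F t = iterOp k G t := by
  induction k with
  | zero => exact h
  | succ k ih =>
    intro t ht
    have : iterOp k F =ᶠ[𝓝 t] iterOp k G := by filter_upwards [Ioi_mem_nhds ht] using ih
    simp only [iterOp, this.deriv_eq]

lemma iterOp_succ' (k : ℕ) (F : ℝ → ℝ) : iterOp (k + 1) F = iterOp k (iterOp 1 F) := by
  induction k with
  | zero => rfl
  | succ k ih =>
    funext t
    rw [iterOp, ih, ← iterOp]

lemma iterOp_one_pow_mul {f : ℝ → ℝ} {t : ℝ} (hf : DifferentiableAt ℝ f t) (ht : t ≠ 0) (k : ℕ) :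
    iterOp 1 (fun s => s ^ (2 * k + 3) * f s) t =
      t ^ (2 * k + 1) * ((2 * k + 3) * f t + t * deriv f t) := by
  simp only [iterOp]
  rw [((hasDerivAt_pow (2 * k + 3) t).fun_mul hf.hasDerivAt).deriv]
  push_cast
  field_simp
  ring

lemma iterOp_pow_mul (k : ℕ) {f : ℝ → ℝ} (hf : ContDiff ℝ ∞ f) {t : ℝ} (ht : 0 < t) :
    iterOp k (fun s => s ^ (2 * k + 1) * f s) t = t * darbouxOp k f t := by
  induction k generalizing f with
  | zero => simp [iterOp, darbouxOp]
  | succ k ih =>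
    have hf' : ContDiff ℝ ∞ fun s => (2 * k + 3) * f s + s * deriv f s := by
      have := (contDiff_infty_iff_deriv.1 hf).2
      fun_prop
    rw [iterOp_succ', darbouxOp, ← ih hf']
    exact iterOp_congr_s2 (fun s hs =>
      iterOp_one_pow_mul (hf.differentiable (by simp) s) hs.ne' k) k t ht

lemma darbouxOp_zero_right (k : ℕ) (f : ℝ → ℝ) : darbouxOp k f 0 = (2 * k + 1)‼ * f 0 := by
  induction k generalizing f with
  | zero => simp [darbouxOp]
  | succ k ih =>
    rw [darbouxOp, ih, show 2 * (k + 1) + 1 = 2 * k + 1 + 2 by ring, Nat.doubleFactorial]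
    push_cast
    ring

lemma darbouxOp_add_const_mul (k : ℕ) {f w : ℝ → ℝ} (hf : ContDiff ℝ ∞ f) (hw : ContDiff ℝ ∞ w)
    (c t : ℝ) :
    darbouxOp k (fun s => f s + c * w s) t = darbouxOp k f t + c * darbouxOp k w t := by
  induction k generalizing f w with
  | zero => rfl
  | succ k ih =>
    have := (contDiff_infty_iff_deriv.1 hf).2
    have := (contDiff_infty_iff_deriv.1 hw).2
    simp only [darbouxOp]
    rw [← ih (by fun_prop) (by fun_prop)]
    congr 1
    funext s
    have hfd := hf.differentiable (by simp) s
    have hwd := hw.differentiable (by simp) s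
    rw [deriv_fun_add hfd (by fun_prop), deriv_const_mul _ hwd]
    ring

lemma contDiff_darbouxOp {E : Type*} [NormedAddCommGroup E] [NormedSpace ℝ E] (k : ℕ)
    {H : E → ℝ → ℝ} (hH : ContDiff ℝ ∞ fun p : E × ℝ => H p.1 p.2) :
    ContDiff ℝ ∞ fun p : E × ℝ => darbouxOp k (H p.1) p.2 := by
  induction k generalizing H with
  | zero => simpa only [darbouxOp] using hH
  | succ k ih =>
    have := contDiff_deriv_snd hH
    exact ih (H := fun x s => (2 * k + 3) * H x s + s * deriv (H x) s) (by fun_prop)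

lemma lap_darbouxOp {n : ℕ} (k : ℕ) {H : EuclideanSpace ℝ (Fin n) → ℝ → ℝ}
    (hH : ContDiff ℝ ∞ fun p : EuclideanSpace ℝ (Fin n) × ℝ => H p.1 p.2)
    (x : EuclideanSpace ℝ (Fin n)) (t : ℝ) :
    lap (fun z => darbouxOp k (H z) t) x = darbouxOp k (fun s => lap (fun z => H z s) x) t := by
  induction k generalizing H with
  | zero => simp only [darbouxOp]
  | succ k ih =>
    have hH' := contDiff_deriv_snd hH
    refine (ih (H := fun x s => (2 * k + 3) * H x s + s * deriv (H x) s) (by fun_prop)).trans ?_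
    rw [darbouxOp]
    congr 1
    funext s
    have h1 : ContDiff ℝ ∞ fun z => H z s := hH.comp (contDiff_prodMk_left s)
    have h2 : ContDiff ℝ ∞ fun z => deriv (H z) s := hH'.comp (contDiff_prodMk_left s)
    rw [lap_add (by fun_prop) (by fun_prop), lap_const_mul, lap_const_mul, lap_deriv_comm hH]

lemma deriv_id_mul {f : ℝ → ℝ} {t : ℝ} (hf : DifferentiableAt ℝ f t) :
    deriv (fun s => s * f s) t = f t + t * deriv f t := by
  simpa using ((hasDerivAt_id t).fun_mul hf.hasDerivAt).deriv

lemma deriv_deriv_id_mul {f : ℝ → ℝ} (hf : ContDiff ℝ ∞ f) (t : ℝ) :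
    deriv (deriv fun s => s * f s) t = t * deriv (deriv f) t + 2 * deriv f t := by
  have hd := hf.differentiable (by simp)
  have hd' := (contDiff_infty_iff_deriv.1 hf).2.differentiable (by simp)
  have h1 : (deriv fun s => s * f s) = fun s => f s + s * deriv f s :=
    funext fun s => deriv_id_mul (hd s)
  rw [h1, deriv_fun_add (hd t) (by fun_prop),
    deriv_id_mul (hd' t)]
  ring

lemma deriv_deriv_mul_darbouxOp (k : ℕ) {f w : ℝ → ℝ} (hf : ContDiff ℝ ∞ f)
    (hw : ContDiff ℝ ∞ w)
    (h : ∀ t > 0, t * deriv (deriv f) t + (2 * k + 2) * deriv f t = t * w t) {t : ℝ}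
    (ht : 0 < t) :
    deriv (deriv fun s => s * darbouxOp k f s) t = t * darbouxOp k w t := by
  induction k generalizing f w with
  | zero => simpa [darbouxOp, deriv_deriv_id_mul hf] using h t ht
  | succ k ih =>
    have hf' := (contDiff_infty_iff_deriv.1 hf).2
    have := (contDiff_infty_iff_deriv.1 hw).2
    refine ih (by fun_prop) (by fun_prop) fun s hs => ?_
    -- The equation says `((2k+3) f + s f')' = s w`, and hence `((2k+3) f + s f')'' = w + s w'`.
    have h1 (r : ℝ) (hr : 0 < r) : deriv (fun s => (2 * k + 3) * f s + s * deriv f s) r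
        = r * w r := by
      have hd := hf.differentiable (by simp) r
      have hd' := hf'.differentiable (by simp) r
      rw [← h r hr, deriv_fun_add (by fun_prop) (by fun_prop), deriv_const_mul _ hd,
        deriv_id_mul hd']
      push_cast
      ring
    have h2 : deriv (deriv fun s => (2 * k + 3) * f s + s * deriv f s) s
        = w s + s * deriv w s := by
      have : deriv (fun s => (2 * k + 3) * f s + s * deriv f s) =ᶠ[𝓝 s] fun r => r * w r := by
        filter_upwards [Ioi_mem_nhds hs] using h1
      rw [this.deriv_eq, deriv_id_mul (hw.differentiable (by simp) s)]
    rw [h1 s hs, h2]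
    ring

end DarbouxOp

/-! ### Integrals against kernels of `s² - |y|²` -/

section Kernel

/-- `L` is a continuous primitive of the nonnegative kernel `K`, and both vanish on the nonpositive
half-line; `K` may blow up at `0⁺`. -/
structure IsKernelPrimitive (L K : ℝ → ℝ) : Prop where
  continuous : Continuous L
  measurable : Measurable K
  nonneg : ∀ τ, 0 ≤ K τ
  of_nonpos : ∀ τ ≤ 0, L τ = 0
  of_nonpos' : ∀ τ ≤ 0, K τ = 0
  hasDerivAt_of_pos : ∀ τ > 0, HasDerivAt L (K τ) τ

namespace IsKernelPrimitive

variable {L K : ℝ → ℝ}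

lemma hasDerivAt_of_ne_zero (h : IsKernelPrimitive L K) {τ : ℝ} (hτ : τ ≠ 0) :
    HasDerivAt L (K τ) τ := by
  rcases hτ.lt_or_gt with hτ | hτ
  · rw [h.of_nonpos' τ hτ.le]
    refine (hasDerivAt_const τ (0 : ℝ)).congr_of_eventuallyEq ?_
    filter_upwards [Iio_mem_nhds hτ] with σ hσ using h.of_nonpos σ (le_of_lt hσ)
  · exact h.hasDerivAt_of_pos τ hτ

lemma hasDerivAt (h : IsKernelPrimitive L K) (hK : Continuous K) (τ : ℝ) :
    HasDerivAt L (K τ) τ :=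
  hasDerivAt_of_hasDerivAt_of_ne' (x := 0) (fun _ => h.hasDerivAt_of_ne_zero)
    h.continuous.continuousAt hK.continuousAt τ

lemma hasDerivAt_sq_sub (h : IsKernelPrimitive L K) {r σ : ℝ} (hσ : σ ^ 2 - r ^ 2 ≠ 0) :
    HasDerivAt (fun σ => L (σ ^ 2 - r ^ 2) / 2) (σ * K (σ ^ 2 - r ^ 2)) σ := by
  have h1 : HasDerivAt (fun σ : ℝ => σ ^ 2 - r ^ 2) (2 * σ) σ := by
    simpa using (hasDerivAt_pow 2 σ).sub_const (r ^ 2)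
  refine (((h.hasDerivAt_of_ne_zero hσ).comp σ h1).div_const 2).congr_deriv ?_
  ring

lemma intervalIntegrable (h : IsKernelPrimitive L K) {r s : ℝ} (hr : 0 ≤ r) (hs : 0 ≤ s) :
    IntervalIntegrable (fun σ => σ * K (σ ^ 2 - r ^ 2)) volume 0 s := by
  have hzero (c : ℝ) (hc0 : 0 ≤ c) (hc : c ≤ r) :
      IntervalIntegrable (fun σ => σ * K (σ ^ 2 - r ^ 2)) volume 0 c := by
    refine (intervalIntegrable_const (c := (0 : ℝ))).congr fun σ hσ => ?_
    rw [uIoc_of_le hc0] at hσ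
    simp [h.of_nonpos' (σ ^ 2 - r ^ 2) (by nlinarith [hσ.1, hσ.2])]
  rcases le_total s r with hsr | hrs
  · exact hzero s hs hsr
  refine (hzero r hr le_rfl).trans ?_
  rw [intervalIntegrable_iff_integrableOn_Ioc_of_le hrs]
  refine intervalIntegral.integrableOn_deriv_of_nonneg
    (g := fun σ => L (σ ^ 2 - r ^ 2) / 2) ?_ (fun σ hσ => ?_) (fun σ hσ => ?_)
  · exact ((h.continuous.comp (by fun_prop)).div_const 2).continuousOn
  · exact h.hasDerivAt_sq_sub (by nlinarith [hσ.1, hσ.2])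
  · exact mul_nonneg (hr.trans hσ.1.le) (h.nonneg _)

lemma setIntegral_Ioc_eq (h : IsKernelPrimitive L K) {r s : ℝ} (hr : 0 ≤ r) (hs : 0 ≤ s) :
    ∫ σ in Ioc 0 s, σ * K (σ ^ 2 - r ^ 2) = L (s ^ 2 - r ^ 2) / 2 := by
  rw [← intervalIntegral.integral_of_le hs,
    integral_eq_of_hasDerivAt_off_countable_of_le (fun σ => L (σ ^ 2 - r ^ 2) / 2) _ hs
    (countable_singleton r) ((h.continuous.comp (by fun_prop)).div_const 2).continuousOn
    (fun σ hσ => h.hasDerivAt_sq_sub ?_) (h.intervalIntegrable hr hs)]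
  · rw [h.of_nonpos (0 ^ 2 - r ^ 2) (by nlinarith)]
    simp
  · intro h0
    exact hσ.2 ((sq_eq_sq₀ hσ.1.1.le hr).1 (by linarith))

end IsKernelPrimitive

variable {E : Type*} [NormedAddCommGroup E] [InnerProductSpace ℝ E] [FiniteDimensional ℝ E]
  [MeasurableSpace E] [BorelSpace E]

/-- The integral of `h` over `E` against the radial kernel `K (s² - |y|²)`. For a kernel vanishing
on the nonpositive half-line this is an integral over the ball of radius `s`. -/
def radialInt (K : ℝ → ℝ) (h : E → ℝ) (s : ℝ) : ℝ :=
  ∫ y, K (s ^ 2 - ‖y‖ ^ 2) * h y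

omit [MeasurableSpace E] [BorelSpace E] in
lemma hasCompactSupport_kernel {K : ℝ → ℝ} (hK : ∀ τ ≤ 0, K τ = 0) (s : ℝ) :
    HasCompactSupport fun y : E => K (s ^ 2 - ‖y‖ ^ 2) := by
  refine HasCompactSupport.intro (isCompact_closedBall (0 : E) |s|) fun y hy => hK _ ?_
  rw [mem_closedBall_zero_iff, not_le] at hy
  nlinarith [sq_abs s, abs_nonneg s]

lemma integrable_kernel_mul {K : ℝ → ℝ} (hK : ∀ τ ≤ 0, K τ = 0) (hKc : Continuous K) (s : ℝ)
    {f : E → ℝ} (hf : Continuous f) : Integrable fun y : E => K (s ^ 2 - ‖y‖ ^ 2) * f y :=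
  Continuous.integrable_of_hasCompactSupport
    ((hKc.comp (by fun_prop)).mul hf) (hasCompactSupport_kernel hK s).mul_right

namespace IsKernelPrimitive

variable {L K : ℝ → ℝ} {f : E → ℝ} {s : ℝ}

lemma integrable_prod (h : IsKernelPrimitive L K) (hf : Continuous f) (hs : 0 ≤ s) :
    Integrable (fun p : E × ℝ => p.2 * (K (p.2 ^ 2 - ‖p.1‖ ^ 2) * f p.1))
      (volume.prod (volume.restrict (Ioc 0 s))) := by
  have hm : Measurable fun p : E × ℝ => p.2 * (K (p.2 ^ 2 - ‖p.1‖ ^ 2) * f p.1) := by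
    have := hf.measurable
    have := h.measurable
    fun_prop
  refine (integrable_prod_iff hm.aestronglyMeasurable).2 ⟨ae_of_all _ fun y => ?_, ?_⟩
  · simpa only [mul_assoc] using ((intervalIntegrable_iff_integrableOn_Ioc_of_le hs).1
      (h.intervalIntegrable (norm_nonneg y) hs)).mul_const (f y)
  · have (y : E) : ∫ σ in Ioc 0 s, ‖σ * (K (σ ^ 2 - ‖y‖ ^ 2) * f y)‖
        = L (s ^ 2 - ‖y‖ ^ 2) * (|f y| / 2) := by
      calc _ = ∫ σ in Ioc 0 s, σ * K (σ ^ 2 - ‖y‖ ^ 2) * |f y| := by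
            refine setIntegral_congr_fun measurableSet_Ioc fun σ hσ => ?_
            simp only [norm_mul, norm_eq_abs, abs_of_nonneg (h.nonneg _), abs_of_nonneg hσ.1.le]
            ring
        _ = _ := by
            rw [integral_mul_const, h.setIntegral_Ioc_eq (norm_nonneg y) hs]
            ring
    simp only [this]
    exact integrable_kernel_mul h.of_nonpos h.continuous s (by fun_prop)

lemma intervalIntegrable_radialInt (h : IsKernelPrimitive L K) (hf : Continuous f) (hs : 0 ≤ s) :
    IntervalIntegrable (fun σ => σ * radialInt K f σ) volume 0 s := by
  rw [intervalIntegrable_iff_integrableOn_Ioc_of_le hs]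
  simpa only [IntegrableOn, radialInt, integral_const_mul] using
    (h.integrable_prod hf hs).integral_prod_right

lemma radialInt_eq_integral (h : IsKernelPrimitive L K) (hf : Continuous f) (hs : 0 ≤ s) :
    radialInt L f s = 2 * ∫ σ in 0..s, σ * radialInt K f σ := by
  have hy (y : E) : ∫ σ in Ioc 0 s, σ * (K (σ ^ 2 - ‖y‖ ^ 2) * f y)
      = 2⁻¹ * (L (s ^ 2 - ‖y‖ ^ 2) * f y) := by
    simp only [← mul_assoc]
    rw [integral_mul_const, h.setIntegral_Ioc_eq (norm_nonneg y) hs]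
    ring
  have hswap := integral_integral_swap (f := fun (y : E) (σ : ℝ) =>
    σ * (K (σ ^ 2 - ‖y‖ ^ 2) * f y)) (h.integrable_prod hf hs)
  simp only [hy, integral_const_mul] at hswap
  simp only [intervalIntegral.integral_of_le hs, radialInt, ← hswap]
  ring

lemma continuousOn_radialInt (h : IsKernelPrimitive L K) (hf : Continuous f) :
    ContinuousOn (radialInt L f) (Ioi 0) := by
  intro s hs
  have hs0 : 0 < s := hs
  have hint := (intervalIntegrable_iff_integrableOn_Icc_of_le (by positivity)).1
    (h.intervalIntegrable_radialInt hf (by positivity : 0 ≤ s + 1))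
  rw [← uIcc_of_le (by positivity)] at hint
  have hmem : uIcc 0 (s + 1) ∈ 𝓝 s := by
    simpa [uIcc_of_le (by positivity : 0 ≤ s + 1)] using Icc_mem_nhds hs0 (lt_add_one s)
  have hc := ((intervalIntegral.continuousOn_primitive_interval hint).const_mul 2).continuousAt
    hmem
  refine (hc.congr ?_).continuousWithinAt
  filter_upwards [Ioi_mem_nhds hs0] with σ hσ using (h.radialInt_eq_integral hf (le_of_lt hσ)).symm

lemma hasDerivAt_radialInt (h : IsKernelPrimitive L K) (hf : Continuous f)
    (hc : ContinuousOn (radialInt K f) (Ioi 0)) (hs : 0 < s) :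
    HasDerivAt (radialInt L f) (2 * s * radialInt K f s) s := by
  have hc' : ContinuousOn (fun σ => σ * radialInt K f σ) (Ioi 0) := continuousOn_id.mul hc
  have hd := (intervalIntegral.integral_hasDerivAt_right (h.intervalIntegrable_radialInt hf hs.le)
    (hc'.stronglyMeasurableAtFilter isOpen_Ioi s hs)
    (hc'.continuousAt (Ioi_mem_nhds hs))).const_mul 2
  refine (hd.congr_of_eventuallyEq ?_).congr_deriv (by ring)
  filter_upwards [Ioi_mem_nhds hs] with σ hσ using h.radialInt_eq_integral hf (le_of_lt hσ)

lemma radialInt_lineDeriv_of_continuous (h : IsKernelPrimitive L K) (hK : Continuous K)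
    (hf : ContDiff ℝ 1 f) (v : E) (s : ℝ) :
    radialInt L (fun y => lineDeriv ℝ f y v) s =
      2 * radialInt K (fun y => inner ℝ y v * f y) s := by
  have hfd := hf.differentiable one_ne_zero
  have hline (y : E) : lineDeriv ℝ f y v = fderiv ℝ f y v := (hfd y).lineDeriv_eq_fderiv
  have hL (y : E) : HasFDerivAt (fun y : E => L (s ^ 2 - ‖y‖ ^ 2))
      (K (s ^ 2 - ‖y‖ ^ 2) • (-(2 • innerSL ℝ y) : E →L[ℝ] ℝ)) y :=
    (h.hasDerivAt hK _).comp_hasFDerivAt (f := fun y : E => s ^ 2 - ‖y‖ ^ 2) y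
      ((hasStrictFDerivAt_norm_sq y).hasFDerivAt.const_sub (s ^ 2))
  have hL' (y : E) : fderiv ℝ (fun y : E => L (s ^ 2 - ‖y‖ ^ 2)) y v
      = -2 * (K (s ^ 2 - ‖y‖ ^ 2) * inner ℝ y v) := by
    rw [(hL y).fderiv]
    simp
    ring
  have hinner : Continuous fun y => inner ℝ y v * f y := by fun_prop
  have hfv : Continuous fun y => fderiv ℝ f y v :=
    (hf.continuous_fderiv one_ne_zero).clm_apply continuous_const
  have hparts := integral_mul_fderiv_eq_neg_fderiv_mul_of_integrable (μ := (volume : Measure E))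
    (f := fun y : E => L (s ^ 2 - ‖y‖ ^ 2)) (g := f) (v := v) ?_
      (integrable_kernel_mul h.of_nonpos h.continuous s hfv)
      (integrable_kernel_mul h.of_nonpos h.continuous s hf.continuous)
      (fun y _ => (hL y).differentiableAt) (fun y _ => hfd y)
  · simp only [radialInt, hline, hparts, hL', ← integral_const_mul, ← integral_neg]
    congr 1 with y
    ring
  · simpa only [hL', mul_assoc] using
      (integrable_kernel_mul h.of_nonpos' hK s hinner).const_mul (-2)

/-- The kernel `K` need not be differentiable: the formula is the derivative in `s` of integration
by parts for the primitive `L`. -/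
lemma radialInt_lineDeriv {K' : ℝ → ℝ} (h : IsKernelPrimitive L K) (h' : IsKernelPrimitive K K')
    (hf : ContDiff ℝ 1 f) (v : E)
    (hc : ContinuousOn (radialInt K' fun y => inner ℝ y v * f y) (Ioi 0)) (hs : 0 < s) :
    radialInt K (fun y => lineDeriv ℝ f y v) s
      = 2 * radialInt K' (fun y => inner ℝ y v * f y) s := by
  have hfd := hf.differentiable one_ne_zero
  have hinner : Continuous fun y => inner ℝ y v * f y := by fun_prop
  have hfv : Continuous fun y => lineDeriv ℝ f y v := by
    simp only [(hfd _).lineDeriv_eq_fderiv]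
    exact (hf.continuous_fderiv one_ne_zero).clm_apply continuous_const
  have h1 := h.hasDerivAt_radialInt hfv (h'.continuousOn_radialInt hfv) hs
  have h2 := (h'.hasDerivAt_radialInt hinner hc hs).const_mul 2
  rw [← funext (h.radialInt_lineDeriv_of_continuous h'.continuous hf v)] at h2
  have := h1.unique h2
  have hs0 := hs.ne'
  field_simp at this
  linarith

end IsKernelPrimitive

end Kernel

section WaveKernels

/-- The kernel `cosh (√τ / 2) / √τ` of the solution formula, extended by zero to `τ ≤ 0`. -/
def coshKernel (τ : ℝ) : ℝ := cosh (1 / 2 * √τ) / √τ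

/-- The primitive of `coshKernel`, extended by zero to `τ ≤ 0`. -/
def sinhKernel (τ : ℝ) : ℝ := 4 * sinh (1 / 2 * √τ)

/-- The primitive of `sinhKernel`, extended by zero to `τ ≤ 0`. -/
def sinhKernelPrimitive (τ : ℝ) : ℝ := 16 * (√τ * cosh (1 / 2 * √τ)) - 32 * sinh (1 / 2 * √τ)

lemma isKernelPrimitive_sinhKernel : IsKernelPrimitive sinhKernel coshKernel where
  continuous := by unfold sinhKernel; fun_prop
  measurable := by unfold coshKernel; fun_prop
  nonneg τ := div_nonneg (cosh_pos _).le (sqrt_nonneg τ)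
  of_nonpos τ hτ := by simp [sinhKernel, sqrt_eq_zero_of_nonpos hτ]
  of_nonpos' τ hτ := by simp [coshKernel, sqrt_eq_zero_of_nonpos hτ]
  hasDerivAt_of_pos τ hτ := by
    refine ((((hasDerivAt_sqrt hτ.ne').const_mul (1 / 2)).sinh).const_mul 4).congr_deriv ?_
    rw [coshKernel]
    field_simp
    ring

lemma isKernelPrimitive_sinhKernelPrimitive :
    IsKernelPrimitive sinhKernelPrimitive sinhKernel where
  continuous := by unfold sinhKernelPrimitive; fun_prop
  measurable := isKernelPrimitive_sinhKernel.continuous.measurable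
  nonneg τ := mul_nonneg (by norm_num) (sinh_nonneg_iff.2 (by positivity))
  of_nonpos τ hτ := by simp [sinhKernelPrimitive, sqrt_eq_zero_of_nonpos hτ]
  of_nonpos' := isKernelPrimitive_sinhKernel.of_nonpos
  hasDerivAt_of_pos τ hτ := by
    have h1 := hasDerivAt_sqrt hτ.ne'
    have h2 := h1.const_mul (1 / 2)
    refine (((h1.mul h2.cosh).const_mul 16).sub (h2.sinh.const_mul 32)).congr_deriv ?_
    rw [sinhKernel]
    field_simp
    ring

lemma setIntegral_closedBall_eq_radialInt {E : Type*} [NormedAddCommGroup E]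
    [InnerProductSpace ℝ E] [FiniteDimensional ℝ E] [MeasurableSpace E] [BorelSpace E]
    (g : E → ℝ) (x : E) {s : ℝ} (hs : 0 < s) :
    ∫ y in closedBall x s, (cosh (1 / 2 * √(s ^ 2 - ‖x - y‖ ^ 2)) / √(s ^ 2 - ‖x - y‖ ^ 2)) * g y =
      radialInt coshKernel (fun y => g (x + y)) s := by
  rw [setIntegral_eq_integral_of_forall_compl_eq_zero, radialInt, ← integral_add_left_eq_self _ x]
  · simp [coshKernel]
  · intro y hy
    rw [mem_closedBall, dist_comm, dist_eq_norm, not_le] at hy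
    rw [sqrt_eq_zero_of_nonpos (by nlinarith), div_zero, zero_mul]

end WaveKernels

/-! ### The hemisphere over the unit ball -/

section Weight

lemma injOn_cos_Ioo_zero_pi_div_two : InjOn cos (Ioo 0 (π / 2)) :=
  injOn_cos.mono (Ioo_subset_Icc_self.trans (Icc_subset_Icc le_rfl (by linarith [pi_pos])))

lemma cos_image_Ioo_zero_pi_div_two : cos '' Ioo 0 (π / 2) = Ioo 0 1 := by
  ext r
  constructor
  · rintro ⟨θ, hθ, rfl⟩
    refine ⟨cos_pos_of_mem_Ioo ⟨by linarith [hθ.1, pi_pos], hθ.2⟩, ?_⟩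
    rw [← cos_zero]
    exact cos_lt_cos_of_nonneg_of_le_pi le_rfl (by linarith [hθ.2, pi_pos]) hθ.1
  · rintro ⟨h0, h1⟩
    exact ⟨arccos r, ⟨arccos_pos.2 h1, arccos_lt_pi_div_two.2 h0⟩,
      cos_arccos (by linarith) h1.le⟩

lemma abs_neg_sin_smul_pow_mul_inv_sqrt {θ : ℝ} (hθ : θ ∈ Ioo 0 (π / 2)) (k : ℕ) :
    |-sin θ| • (cos θ ^ k * (√(1 - cos θ ^ 2))⁻¹) = cos θ ^ k := by
  have hs : 0 < sin θ := sin_pos_of_mem_Ioo ⟨hθ.1, by linarith [hθ.2, pi_pos]⟩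
  rw [← sin_sq, sqrt_sq hs.le, abs_neg, abs_of_pos hs, smul_eq_mul]
  field_simp

lemma pow_mul_inv_sqrt_one_sub_sq_eq_zero (k : ℕ) {r : ℝ} (hr : r ∈ Ioi 0 \ Ioo 0 1) :
    r ^ k * (√(1 - r ^ 2))⁻¹ = 0 := by
  have hr1 : 1 ≤ r := not_lt.1 fun h => hr.2 ⟨hr.1, h⟩
  simp [sqrt_eq_zero_of_nonpos (by nlinarith : 1 - r ^ 2 ≤ 0)]

lemma integrableOn_pow_mul_inv_sqrt_one_sub_sq (k : ℕ) :
    IntegrableOn (fun r : ℝ => r ^ k * (√(1 - r ^ 2))⁻¹) (Ioi 0) := by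
  refine IntegrableOn.of_forall_sdiff_eq_zero (s := Ioo 0 1) ?_ measurableSet_Ioi fun _ =>
    pow_mul_inv_sqrt_one_sub_sq_eq_zero k
  rw [← cos_image_Ioo_zero_pi_div_two,
    integrableOn_image_iff_integrableOn_abs_deriv_smul measurableSet_Ioo
      (fun θ _ => (hasDerivAt_cos θ).hasDerivWithinAt) injOn_cos_Ioo_zero_pi_div_two]
  refine IntegrableOn.congr_fun (f := fun θ => cos θ ^ k) ?_
    (fun θ hθ => (abs_neg_sin_smul_pow_mul_inv_sqrt hθ k).symm) measurableSet_Ioo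
  exact (by fun_prop : Continuous fun θ => cos θ ^ k).integrableOn_Icc.mono_set
    Ioo_subset_Icc_self

lemma integral_pow_mul_inv_sqrt_one_sub_sq (k : ℕ) :
    ∫ r in Ioi (0 : ℝ), r ^ k * (√(1 - r ^ 2))⁻¹ = 1 / 2 * ∫ θ in 0..π, sin θ ^ k := by
  rw [← EulerSine.integral_cos_pow_eq, intervalIntegral.integral_of_le (by positivity),
    integral_Ioc_eq_integral_Ioo,
    setIntegral_eq_of_subset_of_forall_sdiff_eq_zero measurableSet_Ioi Ioo_subset_Ioi_self
      (fun _ => pow_mul_inv_sqrt_one_sub_sq_eq_zero k), ← cos_image_Ioo_zero_pi_div_two,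
    integral_image_eq_integral_abs_deriv_smul measurableSet_Ioo
      (fun θ _ => (hasDerivAt_cos θ).hasDerivWithinAt) injOn_cos_Ioo_zero_pi_div_two]
  exact setIntegral_congr_fun measurableSet_Ioo fun θ hθ =>
    abs_neg_sin_smul_pow_mul_inv_sqrt hθ k

lemma prod_range_two_mul_add_two (k : ℕ) :
    ∏ i ∈ Finset.range k, (2 * (i : ℝ) + 2) = 2 ^ k * k ! := by
  simp only [← mul_add_one, Finset.prod_mul_distrib, Finset.prod_const, Finset.card_range]
  exact_mod_cast congrArg (fun m : ℕ => (2 : ℝ) ^ k * m) (Finset.prod_range_add_one_eq_factorial k)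

lemma prod_range_two_mul_add_three (k : ℕ) :
    ∏ i ∈ Finset.range k, (2 * (i : ℝ) + 3) = (2 * k + 1)‼ := by
  induction k with
  | zero => simp
  | succ k ih =>
    rw [Finset.prod_range_succ, ih, show 2 * (k + 1) + 1 = 2 * k + 1 + 2 by ring,
      Nat.doubleFactorial]
    push_cast
    ring

variable {E : Type*} [NormedAddCommGroup E] [InnerProductSpace ℝ E] [FiniteDimensional ℝ E]
  [MeasurableSpace E] [BorelSpace E]

lemma integrable_inv_sqrt_one_sub_norm_sq [Nontrivial E] :
    Integrable fun z : E => (√(1 - ‖z‖ ^ 2))⁻¹ :=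
  (integrable_fun_norm_addHaar volume (f := fun r => (√(1 - r ^ 2))⁻¹)).2
    (integrableOn_pow_mul_inv_sqrt_one_sub_sq _)

lemma integral_inv_sqrt_one_sub_norm_sq {k : ℕ} (hd : Module.finrank ℝ E = 2 * (k + 1)) :
    ∫ z : E, (√(1 - ‖z‖ ^ 2))⁻¹ = (2 * π) ^ (k + 1) / (2 * k + 1)‼ := by
  have : Nontrivial E := Module.nontrivial_of_finrank_pos (R := ℝ) (by omega)
  have hv : (volume : Measure E).real (ball 0 1) = π ^ (k + 1) / (k + 1)! := by
    rw [Measure.real, InnerProductSpace.volume_ball_of_dim_even hd]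
    simp only [ENNReal.ofReal_one, one_pow, one_mul]
    exact ENNReal.toReal_ofReal (by positivity)
  have hpolar := integral_fun_norm_addHaar (volume : Measure E) fun r => (√(1 - r ^ 2))⁻¹
  simp only [smul_eq_mul, nsmul_eq_mul] at hpolar
  rw [hpolar, integral_pow_mul_inv_sqrt_one_sub_sq, hd, hv,
    show 2 * (k + 1) - 1 = 2 * k + 1 by omega, integral_sin_pow_odd, Finset.prod_div_distrib,
    prod_range_two_mul_add_two, prod_range_two_mul_add_three, Nat.factorial_succ]
  push_cast
  field_simp
  ring

end Weight

section Hemisphere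

variable (E : Type*) [NormedAddCommGroup E] [InnerProductSpace ℝ E] [FiniteDimensional ℝ E]
  [MeasurableSpace E] [BorelSpace E]

/-- The surface measure of the upper unit hemisphere `{(z, ξ) | |z|² + ξ² = 1, ξ > 0}` of `E × ℝ`,
in graph coordinates: `dS = dz / √(1 - |z|²)`. The density vanishes outside the unit ball, where
`√(1 - |z|²) = 0` and `0⁻¹ = 0`. -/
def hemisphereMeasure : Measure (E × ℝ) :=
  ((volume : Measure E).withDensity fun z => ENNReal.ofReal (√(1 - ‖z‖ ^ 2))⁻¹).map
    fun z => (z, √(1 - ‖z‖ ^ 2))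

variable {E}

lemma integral_hemisphereMeasure (f : E × ℝ → ℝ) :
    ∫ p, f p ∂hemisphereMeasure E =
      ∫ z : E, (√(1 - ‖z‖ ^ 2))⁻¹ * f (z, √(1 - ‖z‖ ^ 2)) := by
  have hemb : MeasurableEmbedding fun z : E => (z, √(1 - ‖z‖ ^ 2)) :=
    Continuous.measurableEmbedding (by fun_prop) fun _ _ h => (Prod.ext_iff.1 h).1
  rw [hemisphereMeasure, hemb.integral_map,
    integral_withDensity_eq_integral_toReal_smul (by fun_prop) (by simp)]
  refine integral_congr_ae (ae_of_all _ fun z => ?_)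
  simp [ENNReal.toReal_ofReal]

lemma ae_hemisphereMeasure :
    ∀ᵐ p ∂hemisphereMeasure E, ‖p.1‖ ^ 2 + p.2 ^ 2 = 1 ∧ 0 < p.2 := by
  have hm : MeasurableSet {p : E × ℝ | ‖p.1‖ ^ 2 + p.2 ^ 2 = 1 ∧ 0 < p.2} :=
    (measurableSet_eq_fun (f := fun p : E × ℝ => ‖p.1‖ ^ 2 + p.2 ^ 2) (by fun_prop)
      measurable_const).inter (measurableSet_lt measurable_const measurable_snd)
  rw [hemisphereMeasure, ae_map_iff (by fun_prop) hm, ae_withDensity_iff (by fun_prop)]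
  refine ae_of_all _ fun z hz => ?_
  have hpos : 0 < √(1 - ‖z‖ ^ 2) := by simpa using hz
  exact ⟨by rw [sq_sqrt (sqrt_pos.1 hpos).le]; ring, hpos⟩

lemma ae_mem_closedBall_hemisphereMeasure :
    ∀ᵐ p ∂hemisphereMeasure E, p ∈ closedBall (0 : E × ℝ) 1 := by
  filter_upwards [ae_hemisphereMeasure] with p ⟨h, hpos⟩
  rw [mem_closedBall_zero_iff, Prod.norm_def, max_le_iff, norm_eq_abs, abs_of_pos hpos]
  constructor <;> nlinarith [norm_nonneg p.1]

instance [Nontrivial E] : IsFiniteMeasure (hemisphereMeasure E) := by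
  have := isFiniteMeasure_withDensity_ofReal
    (integrable_inv_sqrt_one_sub_norm_sq (E := E)).hasFiniteIntegral
  exact Measure.isFiniteMeasure_map _ _

lemma integrable_hemisphereMeasure [Nontrivial E] {f : E × ℝ → ℝ} (hf : Continuous f) :
    Integrable f (hemisphereMeasure E) :=
  integrable_of_ae_mem_isCompact (isCompact_closedBall (0 : E × ℝ) 1)
    ae_mem_closedBall_hemisphereMeasure hf

lemma contDiff_integral_hemisphereMeasure [Nontrivial E] {P : Type*} [NormedAddCommGroup P]
    [NormedSpace ℝ P] [FiniteDimensional ℝ P] {f : P × E × ℝ → ℝ} (hf : ContDiff ℝ ∞ f) :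
    ContDiff ℝ ∞ fun q => ∫ p, f (q, p) ∂hemisphereMeasure E :=
  contDiff_integral (isCompact_closedBall (0 : E × ℝ) 1) ae_mem_closedBall_hemisphereMeasure hf

lemma lineDeriv_integral_hemisphereMeasure [Nontrivial E] {P : Type*} [NormedAddCommGroup P]
    [NormedSpace ℝ P] [FiniteDimensional ℝ P] {f : P × E × ℝ → ℝ} (hf : ContDiff ℝ 1 f) (q v : P) :
    lineDeriv ℝ (fun q => ∫ p, f (q, p) ∂hemisphereMeasure E) q v =
      ∫ p, lineDeriv ℝ (fun q => f (q, p)) q v ∂hemisphereMeasure E :=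
  lineDeriv_integral (isCompact_closedBall (0 : E × ℝ) 1) ae_mem_closedBall_hemisphereMeasure hf q v

lemma integral_hemisphereMeasure_const {k : ℕ} (hd : Module.finrank ℝ E = 2 * (k + 1)) (c : ℝ) :
    ∫ _, c ∂hemisphereMeasure E = (2 * π) ^ (k + 1) / (2 * k + 1)‼ * c := by
  rw [integral_hemisphereMeasure, integral_mul_const, integral_inv_sqrt_one_sub_norm_sq hd]

lemma radialInt_eq_integral_hemisphereMeasure {K : ℝ → ℝ} (hK : ∀ τ ≤ 0, K τ = 0) (h : E → ℝ)
    {s : ℝ} (hs : 0 < s) :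
    radialInt K h s = s ^ Module.finrank ℝ E *
      ∫ p, p.2 * K ((s * p.2) ^ 2) * h (s • p.1) ∂hemisphereMeasure E := by
  have hscale := Measure.integral_comp_smul (volume : Measure E)
    (fun y => K (s ^ 2 - ‖y‖ ^ 2) * h y) s
  rw [abs_of_pos (by positivity), smul_eq_mul, eq_inv_mul_iff_mul_eq₀ (by positivity)] at hscale
  rw [radialInt, ← hscale, integral_hemisphereMeasure]
  congr 2 with z
  have harg : s ^ 2 - ‖s • z‖ ^ 2 = s ^ 2 * (1 - ‖z‖ ^ 2) := by
    rw [norm_smul, mul_pow, norm_eq_abs, sq_abs]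
    ring
  rcases le_or_gt (1 - ‖z‖ ^ 2) 0 with hz | hz
  · rw [harg, hK _ (mul_nonpos_of_nonneg_of_nonpos (sq_nonneg s) hz), sqrt_eq_zero_of_nonpos hz]
    simp
  · have := (sqrt_pos.2 hz).ne'
    rw [harg, mul_pow, sq_sqrt hz.le]
    field_simp

lemma radialInt_coshKernel (h : E → ℝ) {s : ℝ} (hs : 0 < s) :
    s * radialInt coshKernel h s = s ^ Module.finrank ℝ E *
      ∫ p, cosh (1 / 2 * (s * p.2)) * h (s • p.1) ∂hemisphereMeasure E := by
  rw [radialInt_eq_integral_hemisphereMeasure isKernelPrimitive_sinhKernel.of_nonpos' h hs,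
    mul_left_comm, ← integral_const_mul]
  congr 1
  refine integral_congr_ae ?_
  filter_upwards [ae_hemisphereMeasure] with p ⟨_, hp⟩
  rw [coshKernel, sqrt_sq (by positivity)]
  field_simp

lemma radialInt_sinhKernel (h : E → ℝ) {s : ℝ} (hs : 0 < s) :
    radialInt sinhKernel h s = s ^ Module.finrank ℝ E *
      ∫ p, 4 * (p.2 * sinh (1 / 2 * (s * p.2))) * h (s • p.1) ∂hemisphereMeasure E := by
  rw [radialInt_eq_integral_hemisphereMeasure isKernelPrimitive_sinhKernel.of_nonpos h hs]
  congr 1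
  refine integral_congr_ae ?_
  filter_upwards [ae_hemisphereMeasure] with p ⟨_, hp⟩
  rw [sinhKernel, sqrt_sq (by positivity)]
  ring

lemma radialInt_coshKernel_sum [Nontrivial E] {ι : Type*} (I : Finset ι) {h : ι → E → ℝ}
    (hh : ∀ i, Continuous (h i)) {s : ℝ} (hs : 0 < s) :
    radialInt coshKernel (fun y => ∑ i ∈ I, h i y) s = ∑ i ∈ I, radialInt coshKernel (h i) s := by
  refine mul_left_cancel₀ hs.ne' ?_
  simp only [Finset.mul_sum, radialInt_coshKernel _ hs]
  rw [integral_finsetSum I fun i _ => integrable_hemisphereMeasure (by fun_prop), Finset.mul_sum]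

lemma continuousOn_radialInt_coshKernel [Nontrivial E] {h : E → ℝ} (hh : ContDiff ℝ ∞ h) :
    ContinuousOn (radialInt coshKernel h) (Ioi 0) := by
  have hc : ContDiff ℝ ∞ fun s : ℝ =>
      ∫ p, cosh (1 / 2 * (s * p.2)) * h (s • p.1) ∂hemisphereMeasure E :=
    contDiff_integral_hemisphereMeasure
      (f := fun q : ℝ × E × ℝ => cosh (1 / 2 * (q.1 * q.2.2)) * h (q.1 • q.2.1)) (by fun_prop)
  have hc' := hc.continuous
  refine ContinuousOn.congr (f := fun s => s⁻¹ * (s ^ Module.finrank ℝ E *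
    ∫ p, cosh (1 / 2 * (s * p.2)) * h (s • p.1) ∂hemisphereMeasure E)) ?_ fun s hs => ?_
  · exact (continuousOn_inv₀.mono fun s hs => (mem_Ioi.1 hs).ne').mul (by fun_prop)
  · beta_reduce
    rw [← radialInt_coshKernel h hs, inv_mul_cancel_left₀ (mem_Ioi.1 hs).ne']

end Hemisphere

/-! ### The Euler–Poisson–Darboux equation -/

section HemisphereInt

variable {E : Type*} [NormedAddCommGroup E] [InnerProductSpace ℝ E] [FiniteDimensional ℝ E]
  [MeasurableSpace E] [BorelSpace E]

/-- The integral over the hemisphere which, up to a power of `s`, is `radialInt coshKernel` of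
`g (x + ·)` rescaled to the unit ball; unlike the latter it is smooth up to `s = 0`. -/
def hemisphereInt (g : E → ℝ) (x : E) (s : ℝ) : ℝ :=
  ∫ p, cosh (1 / 2 * (s * p.2)) * g (x + s • p.1) ∂hemisphereMeasure E

lemma mul_radialInt_coshKernel_eq_hemisphereInt (g : E → ℝ) (x : E) {s : ℝ} (hs : 0 < s) :
    s * radialInt coshKernel (fun y => g (x + y)) s =
      s ^ Module.finrank ℝ E * hemisphereInt g x s :=
  radialInt_coshKernel _ hs

lemma hemisphereInt_zero {k : ℕ} (hd : Module.finrank ℝ E = 2 * (k + 1)) (g : E → ℝ) (x : E) :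
    hemisphereInt g x 0 = (2 * π) ^ (k + 1) / (2 * k + 1)‼ * g x := by
  simp [hemisphereInt, integral_hemisphereMeasure_const hd]

variable [Nontrivial E]

lemma contDiff_hemisphereInt {g : E → ℝ} (hg : ContDiff ℝ ∞ g) :
    ContDiff ℝ ∞ fun q : E × ℝ => hemisphereInt g q.1 q.2 :=
  contDiff_integral_hemisphereMeasure
    (f := fun x : (E × ℝ) × E × ℝ => cosh (1 / 2 * (x.1.2 * x.2.2)) * g (x.1.1 + x.1.2 • x.2.1))
    (by fun_prop)

lemma lineDeriv_hemisphereInt {g : E → ℝ} (hg : ContDiff ℝ 1 g) (x v : E) (s : ℝ) :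
    lineDeriv ℝ (fun z => hemisphereInt g z s) x v =
      hemisphereInt (fun y => lineDeriv ℝ g y v) x s := by
  refine (lineDeriv_integral_hemisphereMeasure
    (f := fun q : E × E × ℝ => cosh (1 / 2 * (s * q.2.2)) * g (q.1 + s • q.2.1))
    (by fun_prop) x v).trans ?_
  refine integral_congr_ae (ae_of_all _ fun p => ?_)
  have hd : DifferentiableAt ℝ (fun t : ℝ => g (x + t • v + s • p.1)) 0 :=
    (hg.differentiable one_ne_zero).comp (by fun_prop) 0
  simp only [lineDeriv]
  rw [deriv_const_mul _ hd]
  simp only [add_right_comm x]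

lemma deriv_hemisphereInt {g : E → ℝ} (hg : ContDiff ℝ 1 g) (x : E) (s : ℝ) :
    deriv (hemisphereInt g x) s =
      ∫ p, 4 * (p.2 * sinh (1 / 2 * (s * p.2))) * (g (x + s • p.1) / 8) +
        cosh (1 / 2 * (s * p.2)) * lineDeriv ℝ g (x + s • p.1) p.1 ∂hemisphereMeasure E := by
  rw [deriv_apply_prodMk_eq_lineDeriv]
  refine (lineDeriv_integral_hemisphereMeasure
    (f := fun q : (E × ℝ) × E × ℝ => cosh (1 / 2 * (q.1.2 * q.2.2)) * g (q.1.1 + q.1.2 • q.2.1))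
    (by fun_prop) (x, s) (0, 1)).trans (integral_congr_ae (ae_of_all _ fun p => ?_))
  refine (deriv_apply_prodMk_eq_lineDeriv
    (H := fun x s => cosh (1 / 2 * (s * p.2)) * g (x + s • p.1)) x s).symm.trans ?_
  have hgd := hg.differentiable one_ne_zero
  have h1 : HasDerivAt (fun s : ℝ => cosh (1 / 2 * (s * p.2)))
      (sinh (1 / 2 * (s * p.2)) * (1 / 2 * (1 * p.2))) s :=
    (((hasDerivAt_id s).mul_const p.2).const_mul (1 / 2)).cosh
  have h2 : HasDerivAt (fun s : ℝ => g (x + s • p.1)) (lineDeriv ℝ g (x + s • p.1) p.1) s := by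
    have hγ : HasDerivAt (fun s : ℝ => x + s • p.1) ((1 : ℝ) • p.1) s :=
      ((hasDerivAt_id s).smul_const p.1).const_add x
    exact ((hgd _).hasFDerivAt.comp_hasDerivAt s hγ).congr_deriv
      (by rw [one_smul, (hgd _).lineDeriv_eq_fderiv])
  refine (h1.fun_mul h2).deriv.trans ?_
  ring

end HemisphereInt

section EulerPoissonDarboux

variable {n : ℕ}

local notation "𝔼" => EuclideanSpace ℝ (Fin n)

variable [Nontrivial (EuclideanSpace ℝ (Fin n))] {f g : EuclideanSpace ℝ (Fin n) → ℝ} {s : ℝ}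

lemma lap_hemisphereInt (hg : ContDiff ℝ ∞ g) (x : 𝔼) (s : ℝ) :
    lap (fun z => hemisphereInt g z s) x = hemisphereInt (lap g) x s := by
  have h1 (v : 𝔼) := contDiff_lineDeriv hg v
  have h2 (v : 𝔼) := (contDiff_lineDeriv (h1 v) v).continuous
  simp only [lap_eq_sum_lineDeriv, lineDeriv_hemisphereInt (hg.of_le (by simp)),
    lineDeriv_hemisphereInt ((h1 _).of_le (by simp))]
  simp only [hemisphereInt, lap_eq_sum_lineDeriv, Finset.mul_sum]
  refine (integral_finsetSum _ fun i _ => integrable_hemisphereMeasure ?_).symm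
  exact (by fun_prop : Continuous fun p : 𝔼 × ℝ => cosh (1 / 2 * (s * p.2))).mul
    ((h2 _).comp (by fun_prop))

lemma radialInt_coshKernel_lineDeriv_self (hf : ContDiff ℝ ∞ f) (hs : 0 < s) :
    radialInt coshKernel (fun y => lineDeriv ℝ f y y) s =
      1 / 2 * radialInt sinhKernel (lap f) s := by
  let e (i : Fin n) : 𝔼 := EuclideanSpace.single i 1
  have h1 (i : Fin n) : ContDiff ℝ ∞ fun y => lineDeriv ℝ f y (e i) := contDiff_lineDeriv hf _
  have h2 (i : Fin n) : ContDiff ℝ ∞ fun y : 𝔼 => inner ℝ y (e i) * lineDeriv ℝ f y (e i) :=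
    (contDiff_id.inner ℝ contDiff_const).mul (h1 i)
  have hsum (y : 𝔼) : lineDeriv ℝ f y y = ∑ i, inner ℝ y (e i) * lineDeriv ℝ f y (e i) := by
    have hd := hf.differentiable (by simp) y
    have hy := (EuclideanSpace.basisFun (Fin n) ℝ).sum_repr' y
    simp only [EuclideanSpace.basisFun_apply] at hy
    simp only [hd.lineDeriv_eq_fderiv]
    conv_lhs => enter [2]; rw [← hy]
    simp [e, real_inner_comm]
  have hparts (i : Fin n) := isKernelPrimitive_sinhKernelPrimitive.radialInt_lineDeriv
    isKernelPrimitive_sinhKernel ((h1 i).of_le (by simp)) (e i)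
    (continuousOn_radialInt_coshKernel (h2 i)) hs
  have hlap : radialInt sinhKernel (lap f) s =
      ∑ i, radialInt sinhKernel
        (fun y => lineDeriv ℝ (fun z => lineDeriv ℝ f z (e i)) y (e i)) s := by
    simp only [radialInt, lap_eq_sum_lineDeriv, Finset.mul_sum]
    exact integral_finsetSum _ fun i _ => integrable_kernel_mul
      isKernelPrimitive_sinhKernel.of_nonpos isKernelPrimitive_sinhKernel.continuous s
      (contDiff_lineDeriv (h1 i) _).continuous
  simp only [hsum, radialInt_coshKernel_sum _ (fun i => (h2 i).continuous) hs, hlap, hparts,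
    Finset.mul_sum]
  refine Finset.sum_congr rfl fun i _ => ?_
  ring

lemma pow_mul_integral_cosh_mul_lineDeriv (hg : ContDiff ℝ ∞ g) (x : 𝔼) (hs : 0 < s) :
    s ^ n * ∫ p, cosh (1 / 2 * (s * p.2)) * lineDeriv ℝ g (x + s • p.1) p.1 ∂hemisphereMeasure 𝔼 =
      1 / 2 * radialInt sinhKernel (fun y => lap g (x + y)) s := by
  have hline (y v : 𝔼) : lineDeriv ℝ (fun y => g (x + y)) y v = lineDeriv ℝ g (x + y) v := by
    simp only [lineDeriv, add_assoc]
  have hlap (y : 𝔼) : lap (fun y => g (x + y)) y = lap g (x + y) := by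
    simp only [lap, add_assoc]
  have hgx : ContDiff ℝ ∞ fun y => g (x + y) := by fun_prop
  have h := radialInt_coshKernel (fun y => lineDeriv ℝ g (x + y) y) hs
  simp only [lineDeriv_smul, smul_eq_mul, mul_left_comm (cosh _) s, integral_const_mul,
    finrank_euclideanSpace_fin, mul_left_comm (s ^ n) s] at h
  rw [← mul_left_cancel₀ hs.ne' h]
  simpa only [hline, funext hlap] using radialInt_coshKernel_lineDeriv_self hgx hs

lemma pow_mul_deriv_hemisphereInt (hg : ContDiff ℝ ∞ g) (x : 𝔼) (hs : 0 < s) :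
    s ^ n * deriv (hemisphereInt g x) s =
      1 / 2 * radialInt sinhKernel (fun y => lap g (x + y) + 1 / 4 * g (x + y)) s := by
  have hsinh : s ^ n * ∫ p, 4 * (p.2 * sinh (1 / 2 * (s * p.2))) * (g (x + s • p.1) / 8)
      ∂hemisphereMeasure 𝔼 = radialInt sinhKernel (fun y => g (x + y) / 8) s := by
    rw [radialInt_sinhKernel _ hs, finrank_euclideanSpace_fin]
  have hline : Continuous fun p : 𝔼 × ℝ => lineDeriv ℝ g (x + s • p.1) p.1 := by
    simp only [(hg.differentiable (by simp) _).lineDeriv_eq_fderiv]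
    have := hg.continuous_fderiv (by simp)
    fun_prop
  have hlap := (contDiff_lap hg).continuous
  have hint {w : 𝔼 → ℝ} (hw : Continuous w) := integrable_kernel_mul
    isKernelPrimitive_sinhKernel.of_nonpos isKernelPrimitive_sinhKernel.continuous s hw
  have hsplit : radialInt sinhKernel (fun y => lap g (x + y) + 1 / 4 * g (x + y)) s =
      radialInt sinhKernel (fun y => lap g (x + y)) s +
        2 * radialInt sinhKernel (fun y => g (x + y) / 8) s := by
    simp only [radialInt, mul_add]
    rw [integral_add (hint (by fun_prop)) (hint (by fun_prop)), ← integral_const_mul]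
    congr 2 with y
    ring
  rw [deriv_hemisphereInt (hg.of_le (by simp)),
    integral_add (integrable_hemisphereMeasure (by fun_prop))
      (integrable_hemisphereMeasure (by fun_prop)), mul_add, hsinh,
    pow_mul_integral_cosh_mul_lineDeriv hg x hs, hsplit]
  ring

lemma hemisphereInt_add_const_mul {w : 𝔼 → ℝ} (hg : Continuous g) (hw : Continuous w) (c : ℝ)
    (x : 𝔼) (s : ℝ) :
    hemisphereInt (fun y => g y + c * w y) x s = hemisphereInt g x s + c * hemisphereInt w x s := by
  simp only [hemisphereInt, mul_add, mul_left_comm _ c]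
  rw [integral_add (integrable_hemisphereMeasure (by fun_prop))
    (integrable_hemisphereMeasure (by fun_prop)), integral_const_mul]

lemma euler_poisson_darboux_hemisphereInt (hg : ContDiff ℝ ∞ g) (x : 𝔼) (hs : 0 < s) :
    s * deriv (deriv (hemisphereInt g x)) s + n * deriv (hemisphereInt g x) s =
      s * (lap (fun z => hemisphereInt g z s) x + 1 / 4 * hemisphereInt g x s) := by
  have hlap := contDiff_lap hg
  have hM : ContDiff ℝ ∞ (hemisphereInt g x) :=
    (contDiff_hemisphereInt hg).comp (contDiff_prodMk_right x)
  have hM' := (contDiff_infty_iff_deriv.1 hM).2.differentiable (by simp) s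
  have hw : ContDiff ℝ ∞ fun y => lap g (x + y) + 1 / 4 * g (x + y) := by fun_prop
  have hright := (isKernelPrimitive_sinhKernel.hasDerivAt_radialInt hw.continuous
    (continuousOn_radialInt_coshKernel hw) hs).const_mul (1 / 2)
  have hleft := ((hasDerivAt_pow n s).fun_mul hM'.hasDerivAt).congr_of_eventuallyEq
    (show _ =ᶠ[𝓝 s] _ by
      filter_upwards [Ioi_mem_nhds hs] with r hr using (pow_mul_deriv_hemisphereInt hg x hr).symm)
  have hcosh := mul_radialInt_coshKernel_eq_hemisphereInt (fun y => lap g y + 1 / 4 * g y) x hs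
  rw [hemisphereInt_add_const_mul hlap.continuous hg.continuous, ← lap_hemisphereInt hg,
    finrank_euclideanSpace_fin] at hcosh
  refine mul_left_cancel₀ (pow_pos hs n).ne' ?_
  have hpow : n * s ^ (n - 1) * s = n * s ^ n := by cases n <;> simp [pow_succ, mul_assoc]
  linear_combination s * hleft.unique hright + s * hcosh - deriv (hemisphereInt g x) s * hpow

end EulerPoissonDarboux

/-! ### The Cauchy problem -/

section KleinGordon

variable {k : ℕ}

local notation "𝔼" => EuclideanSpace ℝ (Fin (2 * (k + 1)))

local instance : Nontrivial (EuclideanSpace ℝ (Fin (2 * (k + 1)))) :=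
  Module.nontrivial_of_finrank_pos (R := ℝ) (by rw [finrank_euclideanSpace_fin]; omega)

/-- The solution of `∂²v/∂t² = Δv + v/4` for `t > 0` in dimension `2 (k + 1)` with Cauchy data `0`
and `g` at `t = 0`. The factor `exp (-t / 2)` turns it into a solution of the damped wave
equation. -/
def kleinGordonSolution (k : ℕ) (g : EuclideanSpace ℝ (Fin (2 * (k + 1))) → ℝ)
    (x : EuclideanSpace ℝ (Fin (2 * (k + 1)))) (t : ℝ) : ℝ :=
  ((2 * π) ^ (k + 1))⁻¹ * (t * darbouxOp k (hemisphereInt g x) t)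

variable {g : EuclideanSpace ℝ (Fin (2 * (k + 1))) → ℝ}

lemma contDiff_kleinGordonSolution (hg : ContDiff ℝ ∞ g) :
    ContDiff ℝ ∞ fun p : 𝔼 × ℝ => kleinGordonSolution k g p.1 p.2 :=
  contDiff_const.mul (contDiff_snd.mul (contDiff_darbouxOp k (contDiff_hemisphereInt hg)))

lemma kleinGordonSolution_zero (x : 𝔼) : kleinGordonSolution k g x 0 = 0 := by
  simp [kleinGordonSolution]

lemma deriv_kleinGordonSolution_zero (hg : ContDiff ℝ ∞ g) (x : 𝔼) :
    deriv (kleinGordonSolution k g x) 0 = g x := by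
  have hP : DifferentiableAt ℝ (fun t => darbouxOp k (hemisphereInt g x) t) 0 :=
    ((contDiff_darbouxOp k (contDiff_hemisphereInt hg)).comp
      (contDiff_prodMk_right x)).differentiable (by simp) 0
  refine (deriv_const_mul _ (differentiableAt_id.fun_mul hP)).trans ?_
  simp only [deriv_id_mul hP, darbouxOp_zero_right,
    hemisphereInt_zero (finrank_euclideanSpace_fin (𝕜 := ℝ))]
  have := Nat.doubleFactorial_pos (2 * k + 1)
  field_simp
  simp

lemma deriv_deriv_mul_darbouxOp_hemisphereInt (hg : ContDiff ℝ ∞ g) (x : 𝔼) {t : ℝ} (ht : 0 < t) :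
    deriv (deriv fun s => s * darbouxOp k (hemisphereInt g x) s) t =
      t * (lap (fun z => darbouxOp k (hemisphereInt g z) t) x +
        1 / 4 * darbouxOp k (hemisphereInt g x) t) := by
  have hM := contDiff_hemisphereInt hg
  have hMx : ContDiff ℝ ∞ (hemisphereInt g x) := hM.comp (contDiff_prodMk_right x)
  have hlap := (contDiff_lap_fst hM).comp (contDiff_prodMk_right (n := ∞) x)
  simp only [Function.comp_def] at hlap
  rw [lap_darbouxOp k hM, ← darbouxOp_add_const_mul k hlap hMx]
  refine deriv_deriv_mul_darbouxOp k hMx (by fun_prop) (fun s hs => ?_) ht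
  rw [← euler_poisson_darboux_hemisphereInt hg x hs]
  push_cast
  ring

lemma deriv_deriv_kleinGordonSolution (hg : ContDiff ℝ ∞ g) (x : 𝔼) {t : ℝ} (ht : 0 < t) :
    deriv (deriv (kleinGordonSolution k g x)) t =
      lap (fun z => kleinGordonSolution k g z t) x + 1 / 4 * kleinGordonSolution k g x t := by
  have hv (x : 𝔼) : kleinGordonSolution k g x =
      fun s => ((2 * π) ^ (k + 1))⁻¹ * (s * darbouxOp k (hemisphereInt g x) s) := rfl
  simp only [hv, deriv_const_mul_field', lap_const_mul,
    deriv_deriv_mul_darbouxOp_hemisphereInt hg x ht]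
  ring

lemma setIntegral_closedBall_eq_hemisphereInt (g : 𝔼 → ℝ) (x : 𝔼) {s : ℝ} (hs : 0 < s) :
    ∫ y in closedBall x s, (cosh (1 / 2 * √(s ^ 2 - ‖x - y‖ ^ 2)) / √(s ^ 2 - ‖x - y‖ ^ 2)) * g y =
      s ^ (2 * k + 1) * hemisphereInt g x s := by
  have h := mul_radialInt_coshKernel_eq_hemisphereInt g x hs
  rw [finrank_euclideanSpace_fin] at h
  rw [setIntegral_closedBall_eq_radialInt g x hs]
  refine mul_left_cancel₀ hs.ne' (h.trans ?_)
  ring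

lemma two_mul_cnEven (k : ℕ) : 2 * cnEven (2 * (k + 1)) = ((2 * π) ^ (k + 1))⁻¹ := by
  rw [cnEven, show -(((2 * (k + 1) : ℕ) : ℝ) + 2) / 2 = -((k + 2 : ℕ) : ℝ) by push_cast; ring,
    show -((2 * (k + 1) : ℕ) : ℝ) / 2 = -((k + 1 : ℕ) : ℝ) by push_cast; ring,
    rpow_neg two_pos.le, rpow_neg pi_pos.le, rpow_natCast, rpow_natCast]
  field_simp
  ring

lemma iterOp_setIntegral_eq_kleinGordonSolution (hg : ContDiff ℝ ∞ g) (x : 𝔼) {t : ℝ}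
    (ht : 0 < t) :
    2 * cnEven (2 * (k + 1)) * iterOp k (fun s => ∫ y in closedBall x s,
      (cosh (1 / 2 * √(s ^ 2 - ‖x - y‖ ^ 2)) / √(s ^ 2 - ‖x - y‖ ^ 2)) * g y) t =
      kleinGordonSolution k g x t := by
  have hMx : ContDiff ℝ ∞ (hemisphereInt g x) :=
    (contDiff_hemisphereInt hg).comp (contDiff_prodMk_right x)
  rw [iterOp_congr_s2 (fun s hs => setIntegral_closedBall_eq_hemisphereInt g x hs) k t ht,
    iterOp_pow_mul k hMx ht, two_mul_cnEven, kleinGordonSolution]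

end KleinGordon

section Damping

lemma deriv_exp_neg_half_mul {v : ℝ → ℝ} {t : ℝ} (hv : DifferentiableAt ℝ v t) :
    deriv (fun s => exp (-s / 2) * v s) t = exp (-t / 2) * (deriv v t - 1 / 2 * v t) := by
  have hexp : HasDerivAt (fun s : ℝ => exp (-s / 2)) (exp (-t / 2) * (-1 / 2)) t :=
    ((hasDerivAt_neg t).div_const 2).exp
  rw [(hexp.fun_mul hv.hasDerivAt).deriv]
  ring

lemma deriv_deriv_add_deriv_exp_neg_half_mul {v : ℝ → ℝ} (hv : ContDiff ℝ ∞ v) (t : ℝ) :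
    deriv (deriv fun s => exp (-s / 2) * v s) t + deriv (fun s => exp (-s / 2) * v s) t =
      exp (-t / 2) * (deriv (deriv v) t - 1 / 4 * v t) := by
  have hd := hv.differentiable (by simp)
  have hd' := (contDiff_infty_iff_deriv.1 hv).2.differentiable (by simp)
  have h : (deriv fun s => exp (-s / 2) * v s) =
      fun s => exp (-s / 2) * (deriv v s - 1 / 2 * v s) :=
    funext fun s => deriv_exp_neg_half_mul (hd s)
  rw [h, deriv_exp_neg_half_mul (by fun_prop),
    deriv_fun_sub (hd' t) (by fun_prop), deriv_const_mul _ (hd t)]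
  ring

end Damping

/-- For even `n` and smooth `g`, the function
`u(x,t) = 2 c_n e^{-t/2} ((1/t)∂/∂t)^{(n-2)/2} ∫_{B_t(x)} cosh((1/2)√(t²−r²))/√(t²−r²) g(y) dy`
is smooth on `ℝⁿ × (0,∞)`, solves the damped wave equation there, and satisfies
`u(x,t) → 0` and `∂u/∂t(x,t) → g(x)` as `t → 0⁺`. -/
theorem damped_wave_solution_even_dim (n : ℕ) (hn : Even n) (hn0 : 0 < n)
    (g : EuclideanSpace ℝ (Fin n) → ℝ) (hg : ContDiff ℝ (⊤ : ℕ∞) g)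
    (u : EuclideanSpace ℝ (Fin n) → ℝ → ℝ)
    (hu : ∀ (x : EuclideanSpace ℝ (Fin n)) (t : ℝ), 0 < t →
      u x t = 2 * cnEven n * exp (-t / 2) *
        iterOp ((n - 2) / 2)
          (fun s => ∫ y in closedBall x s,
            (Real.cosh ((1 / 2) * Real.sqrt (s ^ 2 - ‖x - y‖ ^ 2)) /
              Real.sqrt (s ^ 2 - ‖x - y‖ ^ 2)) * g y) t) :
    ContDiffOn ℝ (⊤ : ℕ∞) (fun p : EuclideanSpace ℝ (Fin n) × ℝ => u p.1 p.2) (univ ×ˢ Ioi 0) ∧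
    (∀ (x : EuclideanSpace ℝ (Fin n)) (t : ℝ), 0 < t →
      deriv (deriv (fun s => u x s)) t - lap (fun z => u z t) x
        + deriv (fun s => u x s) t = 0) ∧
    (∀ x : EuclideanSpace ℝ (Fin n),
      Tendsto (fun t => u x t) (𝓝[>] 0) (𝓝 0) ∧
      Tendsto (fun t => deriv (fun s => u x s) t) (𝓝[>] 0) (𝓝 (g x))) := by
  obtain ⟨k, rfl⟩ : ∃ k, n = 2 * (k + 1) := by
    obtain ⟨m, rfl⟩ := hn
    exact ⟨m - 1, by omega⟩
  rw [show (2 * (k + 1) - 2) / 2 = k by omega] at hu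
  have hv := contDiff_kleinGordonSolution hg
  have hvx x : ContDiff ℝ ∞ (kleinGordonSolution k g x) := hv.comp (contDiff_prodMk_right x)
  have huv x : EqOn (u x) (fun t => exp (-t / 2) * kleinGordonSolution k g x t) (Ioi 0) :=
    fun t ht => by
      rw [hu x t ht, mul_right_comm, iterOp_setIntegral_eq_kleinGordonSolution hg x ht, mul_comm]
  have huv' x := (huv x).deriv isOpen_Ioi
  have hsmooth x : ContDiff ℝ ∞ fun t => exp (-t / 2) * kleinGordonSolution k g x t := by fun_prop
  refine ⟨?_, fun x t ht => ?_, fun x => ⟨?_, ?_⟩⟩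
  · exact ContDiffOn.congr (by fun_prop) fun p hp => huv p.1 hp.2
  · rw [(huv' x).deriv isOpen_Ioi ht, huv' x ht, funext fun z => huv z ht, lap_const_mul]
    linear_combination deriv_deriv_add_deriv_exp_neg_half_mul (hvx x) t +
      exp (-t / 2) * deriv_deriv_kleinGordonSolution hg x ht
  · have h0 := tendsto_nhdsWithin_congr (a := 0) (huv x).symm
      (hsmooth x).continuous.continuousWithinAt
    simpa only [kleinGordonSolution_zero, mul_zero] using h0
  · have h0 := tendsto_nhdsWithin_congr (a := 0) (huv' x).symm
      ((hsmooth x).continuous_deriv (by simp)).continuousWithinAt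
    simpa [deriv_exp_neg_half_mul ((hvx x).differentiable (by simp) 0), kleinGordonSolution_zero,
      deriv_kleinGordonSolution_zero hg] using h0
end
end
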